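/- arXiv:1908.06745 — 5 statements merged into one kernel-verified Lean document; each statement's English description precedes it below -/
import Mathlib

section
/- Let r ≥ 2 and let m^{(i)}_j ≥ 1 be integers for i ∈ ℤ/r and j ∈ {1,…,r−1}. Consider the filtered-permutation quandle with components A_i = ∏_{j=1}^{r−1} ℤ/m^{(i)}_j, where x_i(j) is the standard generator of the j-th factor of A_i for j ∈ {1,…,r−1} (identified with its class in ℤ/r) and x_i(0) = 0. Then the structure group of this quandle is abelian (equivalently, isomorphic to ℤ^r) if and only if gcd(m^{(i)}_j, m^{(i+j)}_{r−j}) = 1 for all i ∈ ℤ/r and all j ∈ {1,…,r−1}, where the index i+j is taken modulo r. -/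
variable {X : Type*}

/-- The relators `g_a g_b (g_b g_{a ◁ b})⁻¹` of the structure group. -/
def structureRels (op : X → X → X) : Set (FreeGroup X) :=
  {w | ∃ a b : X,
    w = FreeGroup.of a * FreeGroup.of b * (FreeGroup.of b * FreeGroup.of (op a b))⁻¹}

/-- The structure group `⟨g_a, a ∈ X | g_a g_b = g_b g_{a ◁ b}⟩` of a quandle. -/
abbrev StructureGroup (op : X → X → X) : Type _ := PresentedGroup (structureRels op)

/-- The filtered-permutation (FP) quandle operation on `⊔_{i ∈ ℤ/r} A i`:
`a ◁ b = a + x i (j - i)` for `a ∈ A i`, `b ∈ A j`. -/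
def fpOp {r : ℕ} (A : ZMod r → Type*) [∀ i, AddCommGroup (A i)]
    (x : (i : ZMod r) → ZMod r → A i) :
    (Σ i, A i) → (Σ i, A i) → (Σ i, A i) :=
  fun a b => ⟨a.1, a.2 + x a.1 (b.1 - a.1)⟩

/-- The components `A i = ∏_{j=1}^{r-1} ℤ/m^{(i)}_j` (indexed by `Fin (r-1)`,
where the index `j : Fin (r-1)` stands for `j+1 ∈ {1,…,r-1}`). -/
abbrev stdA (r : ℕ) (m : ZMod r → Fin (r - 1) → ℕ) : ZMod r → Type :=
  fun i => (j : Fin (r - 1)) → ZMod (m i j)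

/-- `stdx r m i k` is the standard generator of the `k`-th factor of `A i` for
`k ≠ 0`, and `0` for `k = 0`. -/
def stdx (r : ℕ) [NeZero r] (m : ZMod r → Fin (r - 1) → ℕ) :
    (i : ZMod r) → ZMod r → stdA r m i := fun i k =>
  if h : k.val = 0 then 0
  else Pi.single (⟨k.val - 1, by have := ZMod.val_lt k; omega⟩ : Fin (r - 1)) 1

lemma stdx_apply (r : ℕ) [NeZero r] (m : ZMod r → Fin (r - 1) → ℕ) (i k : ZMod r)
    (j : Fin (r - 1)) :
    stdx r m i k j = if k = ((j.val + 1 : ℕ) : ZMod r) then 1 else 0 := by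
  have hj : j.val + 1 < r := by have := j.2; omega
  have hv : (((j.val + 1 : ℕ) : ZMod r)).val = j.val + 1 := ZMod.val_cast_of_lt hj
  unfold stdx
  split_ifs with h1 h2 h2
  · rw [h2, hv] at h1; omega
  · rfl
  · have : j = ⟨k.val - 1, by have := ZMod.val_lt k; omega⟩ := by
      apply Fin.ext
      show j.val = k.val - 1
      rw [h2, hv]; omega
    rw [← this]
    simp
  · rw [Pi.single_eq_of_ne]
    intro h
    apply h2
    have h3 : j.val = k.val - 1 := congrArg Fin.val h
    have h4 : j.val + 1 = k.val := by omega
    rw [h4, ZMod.natCast_zmod_val]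

lemma sg_rel {X : Type*} (op : X → X → X) (a b : X) :
    (PresentedGroup.of a : StructureGroup op) * PresentedGroup.of b
      = PresentedGroup.of b * PresentedGroup.of (op a b) := by
  have h : PresentedGroup.mk (structureRels op)
      (FreeGroup.of a * FreeGroup.of b * (FreeGroup.of b * FreeGroup.of (op a b))⁻¹) = 1 :=
    PresentedGroup.one_of_mem ⟨a, b, rfl⟩
  rw [map_mul, map_inv, mul_inv_eq_one, map_mul, map_mul] at h
  exact h

lemma sg_comm {X : Type*} (op : X → X → X)
    (H : ∀ a b : X, (PresentedGroup.of a : StructureGroup op) * PresentedGroup.of b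
      = PresentedGroup.of b * PresentedGroup.of a) (g h : StructureGroup op) :
    g * h = h * g := by
  have h1 : ∀ a : X, ∀ h : StructureGroup op,
      PresentedGroup.of a * h = h * PresentedGroup.of a := by
    intro a h
    have hh : h ∈ Subgroup.closure (Set.range (PresentedGroup.of (rels := structureRels op))) := by
      rw [PresentedGroup.closure_range_of]; trivial
    have hle : Subgroup.closure (Set.range (PresentedGroup.of (rels := structureRels op)))
        ≤ Subgroup.centralizer {PresentedGroup.of a} := by
      rw [Subgroup.closure_le]
      rintro _ ⟨b, rfl⟩
      simp only [SetLike.mem_coe, Subgroup.mem_centralizer_iff, Set.mem_singleton_iff,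
        forall_eq]
      exact H a b
    exact (Subgroup.mem_centralizer_iff.1 (hle hh)) _ rfl
  have hg : g ∈ Subgroup.closure (Set.range (PresentedGroup.of (rels := structureRels op))) := by
    rw [PresentedGroup.closure_range_of]; trivial
  have hle : Subgroup.closure (Set.range (PresentedGroup.of (rels := structureRels op)))
      ≤ Subgroup.centralizer {h} := by
    rw [Subgroup.closure_le]
    rintro _ ⟨b, rfl⟩
    simp only [SetLike.mem_coe, Subgroup.mem_centralizer_iff, Set.mem_singleton_iff, forall_eq]
    exact (h1 b h).symm
  exact ((Subgroup.mem_centralizer_iff.1 (hle hg)) h rfl).symm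

/-- Heisenberg type permutations. -/
def heisPerm {d : ℕ} (p q z : ZMod d) : Equiv.Perm (ZMod d × ZMod d) where
  toFun s := (s.1 + p, s.2 + q * s.1 + z)
  invFun s := (s.1 - p, s.2 - q * (s.1 - p) - z)
  left_inv s := by ext <;> dsimp only <;> ring
  right_inv s := by ext <;> dsimp only <;> ring

lemma heisPerm_rel {d : ℕ} (p q z p' q' z' w : ZMod d) (h : w = z + q * p' - q' * p) :
    heisPerm p q z * heisPerm p' q' z' = heisPerm p' q' z' * heisPerm p q w := by
  subst h
  ext s
  · simp [heisPerm]; ring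
  · simp [heisPerm]; ring

/-- central coordinate -/
def zCoord (r : ℕ) (m : ZMod r → Fin (r - 1) → ℕ) (d : ℕ) (i k : ZMod r) (j j' : Fin (r - 1))
    (a : Σ l, stdA r m l) : ZMod d :=
  if a.1 = i then -(ZMod.cast (a.2 j) : ZMod d) else if a.1 = k then ZMod.cast (a.2 j') else 0

lemma exists_hom (r : ℕ) [NeZero r] (m : ZMod r → Fin (r - 1) → ℕ) (d : ℕ) (i k : ZMod r)
    (j j' : Fin (r - 1)) (hk : k = i + ((j.val + 1 : ℕ) : ZMod r))
    (hi : i = k + ((j'.val + 1 : ℕ) : ZMod r)) (hik : k ≠ i)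
    (h1 : d ∣ m i j) (h2 : d ∣ m k j') :
    ∃ F : StructureGroup (fpOp (stdA r m) (stdx r m)) →* Equiv.Perm (ZMod d × ZMod d),
      F (PresentedGroup.of ⟨i, 0⟩) = heisPerm 1 0 0 ∧
      F (PresentedGroup.of ⟨k, 0⟩) = heisPerm 0 1 0 := by
  let f : (Σ l, stdA r m l) → Equiv.Perm (ZMod d × ZMod d) := fun a =>
    heisPerm (if a.1 = i then 1 else 0) (if a.1 = k then 1 else 0) (zCoord r m d i k j j' a)
  have hf : ∀ w ∈ structureRels (fpOp (stdA r m) (stdx r m)), FreeGroup.lift f w = 1 := by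
    rintro _ ⟨⟨l, a⟩, ⟨l', b⟩, rfl⟩
    rw [map_mul, map_inv, mul_inv_eq_one, map_mul, map_mul]
    simp only [FreeGroup.lift_apply_of]
    apply heisPerm_rel
    simp only [zCoord, fpOp, Pi.add_apply, stdx_apply]
    by_cases hl : l = i
    · subst hl
      have e : (l' - l = ((j.val + 1 : ℕ) : ZMod r)) ↔ l' = k := by
        rw [hk, sub_eq_iff_eq_add, add_comm]
      simp only [if_true, if_neg hik.symm, e, ZMod.cast_add h1]
      by_cases h : l' = k
      · simp [h, ZMod.cast_one h1]; ring
      · simp [h]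
    · by_cases hl2 : l = k
      · subst hl2
        have e : (l' - l = ((j'.val + 1 : ℕ) : ZMod r)) ↔ l' = i := by
          rw [hi, sub_eq_iff_eq_add, add_comm]
        simp only [if_true, if_neg hik, e, ZMod.cast_add h2]
        by_cases h : l' = i
        · simp [h, ZMod.cast_one h2]
        · simp [h]
      · simp [hl, hl2]
  refine ⟨PresentedGroup.toGroup hf, ?_, ?_⟩
  · rw [PresentedGroup.toGroup.of]
    simp [f, zCoord, hik.symm]
  · rw [PresentedGroup.toGroup.of]
    simp [f, zCoord, hik]

lemma pow_shift {G A : Type*} [Group G] [AddCommGroup A] (g : A → G) (x : A) (c : G)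
    (h : ∀ a, g (a + x) = g a * c) (n : ℕ) (hn : n • x = 0) : c ^ n = 1 := by
  have : ∀ n : ℕ, g (n • x) = g 0 * c ^ n := by
    intro n
    induction n with
    | zero => simp
    | succ n ih => rw [succ_nsmul, h, ih, pow_succ, mul_assoc]
  have h2 := this n
  rw [hn] at h2
  exact (mul_eq_left.1 h2.symm)

lemma smul_stdx (r : ℕ) [NeZero r] (m : ZMod r → Fin (r - 1) → ℕ) (i k : ZMod r)
    (j : Fin (r - 1)) (hk : k = ((j.val + 1 : ℕ) : ZMod r)) : m i j • stdx r m i k = 0 := by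
  funext t
  rw [Pi.smul_apply, stdx_apply]
  by_cases h : t = j
  · subst h; simp [hk]
  · rw [if_neg]
    · simp
    · intro h2
      apply h
      have ht := t.2
      have hj := j.2
      have := congrArg ZMod.val (hk.symm.trans h2)
      rw [ZMod.val_cast_of_lt (by omega), ZMod.val_cast_of_lt (by omega)] at this
      exact Fin.ext (by omega)

/-- If the gcd is one then the generators of the two components commute. -/
lemma gens_comm {G A B : Type*} [Group G] [AddCommGroup A] [AddCommGroup B]
    (g : A → G) (g' : B → G) (x : A) (y : B)
    (h : ∀ a b, g a * g' b = g' b * g (a + x)) (h' : ∀ a b, g' b * g a = g a * g' (b + y))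
    (m n : ℕ) (hm : m • x = 0) (hn : n • y = 0) (hmn : Nat.gcd m n = 1) (a : A) (b : B) :
    g a * g' b = g' b * g a := by
  have key : ∀ a b, (g a)⁻¹ * g (a + x) = (g' (b + y))⁻¹ * g' b := by
    intro a b
    have e1 : g (a + x) = (g' b)⁻¹ * (g a * g' b) := by rw [h]; group
    have e2 : g' (b + y) = (g a)⁻¹ * (g' b * g a) := by rw [h']; group
    rw [e1, e2]; group
  set c := (g 0)⁻¹ * g (0 + x) with hc
  have hA : ∀ a, g (a + x) = g a * c := by
    intro a
    rw [hc, key 0 0, ← key a 0]; group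
  have hB : ∀ b, g' (b + y) = g' b * c⁻¹ := by
    intro b
    rw [hc, key 0 b]; group
  have c1 := pow_shift g x c hA m hm
  have c2 := pow_shift g' y c⁻¹ hB n hn
  rw [inv_pow, inv_eq_one] at c2
  have c3 : c = 1 := by
    have := Nat.dvd_gcd (orderOf_dvd_of_pow_eq_one c1) (orderOf_dvd_of_pow_eq_one c2)
    rw [hmn, Nat.dvd_one] at this
    exact orderOf_eq_one_iff.1 this
  rw [h, hA, c3, mul_one]

lemma idx_back (r : ℕ) [NeZero r] (i k : ZMod r) (j : Fin (r - 1))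
    (hk : k = i + ((j.val + 1 : ℕ) : ZMod r)) :
    i = k + ((r - (j.val + 2) + 1 : ℕ) : ZMod r) := by
  have hj := j.2
  rw [hk, add_assoc, ← Nat.cast_add]
  have : j.val + 1 + (r - (j.val + 2) + 1) = r := by omega
  rw [this]; simp

/-- For the FP quandle on the components `A i = ∏_{j=1}^{r-1} ℤ/m^{(i)}_j`
with standard generators, the structure group is abelian iff
`gcd (m^{(i)}_j, m^{(i+j)}_{r-j}) = 1` for all `i ∈ ℤ/r` and `j ∈ {1,…,r-1}`. -/
theorem structureGroup_abelian_iff_gcd (r : ℕ) [NeZero r] (hr : 2 ≤ r)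
    (m : ZMod r → Fin (r - 1) → ℕ) (hm : ∀ i j, 1 ≤ m i j) :
    (∀ g h : StructureGroup (fpOp (stdA r m) (stdx r m)), g * h = h * g) ↔
      ∀ (i : ZMod r) (j : Fin (r - 1)),
        Nat.gcd (m i j)
          (m (i + ((j.val + 1 : ℕ) : ZMod r)) ⟨r - (j.val + 2), by omega⟩) = 1 := by
  constructor
  · intro H i j
    by_contra hne
    have hj := j.2
    obtain ⟨F, hF1, hF2⟩ := exists_hom r m _ i (i + ((j.val + 1 : ℕ) : ZMod r)) j
      ⟨r - (j.val + 2), by omega⟩ rfl (idx_back r i _ j rfl) (by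
        intro h
        rw [add_eq_left, ZMod.natCast_eq_zero_iff] at h
        exact absurd (Nat.le_of_dvd (by omega) h) (by omega))
      (Nat.gcd_dvd_left _ _) (Nat.gcd_dvd_right _ _)
    have h := congrArg F (H (PresentedGroup.of ⟨i, 0⟩)
      (PresentedGroup.of ⟨i + ((j.val + 1 : ℕ) : ZMod r), 0⟩))
    rw [map_mul, map_mul, hF1, hF2] at h
    have h2 := congrArg Prod.snd (Equiv.congr_fun h (0, 0))
    simp only [heisPerm, Equiv.Perm.mul_apply, Equiv.coe_fn_mk] at h2
    simp only [mul_zero, zero_mul, add_zero, zero_add, mul_one] at h2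
    have h3 := (ZMod.natCast_eq_zero_iff 1 _).1 (Nat.cast_one.trans h2.symm)
    exact hne (Nat.dvd_one.1 h3)
  · intro H
    apply sg_comm
    rintro ⟨i, a⟩ ⟨k, b⟩
    by_cases hik : k = i
    · subst hik
      rw [sg_rel]
      simp [fpOp, stdx]
    · have hv : (k - i).val ≠ 0 := by
        rw [Ne, ZMod.val_eq_zero, sub_eq_zero]; exact hik
      have hlt := ZMod.val_lt (k - i)
      let j : Fin (r - 1) := ⟨(k - i).val - 1, by omega⟩
      have hj : k - i = ((j.val + 1 : ℕ) : ZMod r) := by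
        have : j.val + 1 = (k - i).val := by show (k - i).val - 1 + 1 = _; omega
        rw [this, ZMod.natCast_zmod_val]
      have hk : k = i + ((j.val + 1 : ℕ) : ZMod r) := by rw [← hj]; ring
      have hi := idx_back r i k j hk
      have hg := H i j
      rw [← hk] at hg
      exact gens_comm
        (fun a : stdA r m i =>
          (PresentedGroup.of ⟨i, a⟩ : StructureGroup (fpOp (stdA r m) (stdx r m))))
        (fun b : stdA r m k => PresentedGroup.of ⟨k, b⟩)
        (stdx r m i (k - i)) (stdx r m k (i - k))
        (fun a b => sg_rel _ _ _) (fun a b => sg_rel _ _ _) _ _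
        (smul_stdx r m i _ j hj)
        (smul_stdx r m k _ ⟨r - (j.val + 2), by omega⟩ (sub_eq_iff_eq_add'.2 hi)) hg a b
end

section
/- Let (X,◁) be a finite quandle with r orbits whose structure group G(X,◁) is abelian. Then the second rack homology group of (X,◁) is torsion-free: H_2(X,◁) ≅ ℤ^{r²}. -/
variable {X : Type*}

/-- Quandle axioms for a binary operation `op` (right-translation convention):
self-distributivity, bijectivity of right translations, idempotence. -/
structure IsQuandleOp (op : X → X → X) : Prop where
  sd : ∀ a b c, op (op a b) c = op (op a c) (op b c)
  bij : ∀ b, Function.Bijective fun a => op a b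
  idem : ∀ a, op a a = a

/-- A quandle operation is abelian if `(a ◁ b) ◁ c = (a ◁ c) ◁ b`. -/
def IsAbelianOp (op : X → X → X) : Prop :=
  ∀ a b c, op (op a b) c = op (op a c) b

/-- The smallest equivalence relation identifying `a` with `op a b`. -/
def orbitRel (op : X → X → X) : X → X → Prop :=
  Relation.EqvGen fun a b => ∃ c, op a c = b

/-- The setoid of orbits of a quandle. -/
def orbitSetoid (op : X → X → X) : Setoid X :=
  ⟨orbitRel op, Relation.EqvGen.is_equivalence _⟩

/-- The second rack differential `d₂(a,b) = (a◁b) - (a)`. -/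
def d2 (op : X → X → X) : FreeAbelianGroup (X × X) →+ FreeAbelianGroup X :=
  FreeAbelianGroup.lift fun p =>
    FreeAbelianGroup.of (op p.1 p.2) - FreeAbelianGroup.of p.1

/-- The third rack differential
`d₃(a,b,c) = (a◁b,c) - (a,c) - (a◁c, b◁c) + (a,b)`. -/
def d3 (op : X → X → X) : FreeAbelianGroup (X × X × X) →+ FreeAbelianGroup (X × X) :=
  FreeAbelianGroup.lift fun t =>
    FreeAbelianGroup.of (op t.1 t.2.1, t.2.2) - FreeAbelianGroup.of (t.1, t.2.2)
      - FreeAbelianGroup.of (op t.1 t.2.2, op t.2.1 t.2.2)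
      + FreeAbelianGroup.of (t.1, t.2.1)

/-- The second rack homology group `H₂ = ker d₂ / im d₃`. -/
abbrev H2 (op : X → X → X) : Type _ :=
  ↥((d2 op).ker) ⧸ ((d3 op).range.addSubgroupOf (d2 op).ker)


namespace RackH2

/-- The class of an element in its orbit. -/
def cls (op : X → X → X) (x : X) : Quotient (orbitSetoid op) := Quotient.mk _ x

lemma cls_op (op : X → X → X) (a b : X) : cls op (op a b) = cls op a :=
  Quotient.sound (s := orbitSetoid op)
    (Relation.EqvGen.symm _ _ (Relation.EqvGen.rel _ _ ⟨b, rfl⟩))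

open Classical in
/-- The map `(a,b) ↦ e_{[a],[b]}`. -/
noncomputable def Phi (op : X → X → X) : FreeAbelianGroup (X × X) →+
    (Quotient (orbitSetoid op) × Quotient (orbitSetoid op) → ℤ) :=
  FreeAbelianGroup.lift fun p => Pi.single (cls op p.1, cls op p.2) 1

lemma Phi_d3 (op : X → X → X) (t) : Phi op (d3 op t) = 0 := by
  have : (Phi op).comp (d3 op) = 0 := by
    ext t : 1
    simp [Phi, d3, cls_op]
  exact DFunLike.congr_fun this t

/-- Abstract core: a commutative group acting on `X` with a cocycle computing `q`. -/
lemma core [Finite X] (op : X → X → X) {Q G : Type*} [AddCommGroup Q] [AddCommGroup G]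
    (q : FreeAbelianGroup (X × X) →+ Q)
    (act : G → X → X) (F : G → X → Q)
    (act0 : ∀ x, act 0 x = x) (actadd : ∀ g h x, act (g + h) x = act g (act h x))
    (Fadd : ∀ g h x, F (g + h) x = F h x + F g (act h x))
    (e : Quotient (orbitSetoid op) → G)
    (hact : ∀ a b, act (e (cls op b)) a = op a b)
    (hF : ∀ a b, F (e (cls op b)) a = q (FreeAbelianGroup.of (a, b)))
    (z : FreeAbelianGroup (X × X)) (hz : d2 op z = 0) (hP : Phi op z = 0) : q z = 0 := by
  classical
  let O := Quotient (orbitSetoid op)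
  haveI : Fintype O := Fintype.ofFinite O
  have F0 : ∀ x, F 0 x = 0 := by
    intro x
    have := Fadd 0 0 x
    rw [act0, add_zero] at this
    simpa using this
  have horb : ∀ x y, orbitRel op x y → ∃ g, act g x = y := by
    intro x y h
    induction h with
    | rel x y h => obtain ⟨c, rfl⟩ := h; exact ⟨_, hact x c⟩
    | refl x => exact ⟨0, act0 x⟩
    | symm x y _ ih =>
      obtain ⟨g, rfl⟩ := ih
      exact ⟨-g, by rw [← actadd]; simp [act0]⟩
    | trans x y z _ _ ih1 ih2 =>
      obtain ⟨g, rfl⟩ := ih1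
      obtain ⟨h, rfl⟩ := ih2
      exact ⟨h + g, actadd _ _ _⟩
  let s : O → X := Quotient.out
  have hs : ∀ x, ∃ g, act g (s (cls op x)) = x := fun x =>
    horb _ _ (Quotient.exact (s := orbitSetoid op) (Quotient.out_eq _))
  choose p hp using hs
  let St : O → AddSubgroup G := fun i =>
    { carrier := {g | act g (s i) = s i}
      zero_mem' := act0 _
      add_mem' := by
        intro g h hg hh
        simp only [Set.mem_setOf_eq] at *
        rw [actadd, hh, hg]
      neg_mem' := by
        intro g hg
        simp only [Set.mem_setOf_eq] at *
        conv_lhs => rw [← hg]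
        rw [← actadd]; simp [act0] }
  let S : AddSubgroup (O → G) := AddSubgroup.pi Set.univ St
  have hS : ∀ u : S, ∀ i, act (u.1 i) (s i) = s i := fun u i => u.2 i trivial
  let E : S →+ Q :=
    { toFun := fun u => ∑ i, F (u.1 i) (s i)
      map_zero' := by simp [F0]
      map_add' := by
        intro u v
        rw [← Finset.sum_add_distrib]
        refine Finset.sum_congr rfl fun i _ => ?_
        change F (u.1 i + v.1 i) (s i) = _
        rw [Fadd, hS v i, add_comm] }
  let w : X × X → G := fun t => p t.1 + e (cls op t.2) - p (op t.1 t.2)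
  have hw : ∀ t, act (w t) (s (cls op t.1)) = s (cls op t.1) := by
    intro t
    have h1 : act (-(p (op t.1 t.2))) (op t.1 t.2) = s (cls op t.1) := by
      have h2 := congrArg (act (-(p (op t.1 t.2)))) (hp (op t.1 t.2))
      rw [← actadd, neg_add_cancel, act0, cls_op] at h2
      exact h2.symm
    have : w t = -(p (op t.1 t.2)) + (e (cls op t.2) + p t.1) := by simp only [w]; abel
    rw [this, actadd, actadd, hp, hact, h1]
  have hwS : ∀ t, (Pi.single (cls op t.1) (w t) : O → G) ∈ S := by
    intro t i _
    by_cases h : i = cls op t.1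
    · subst h
      rw [Pi.single_eq_same]
      exact hw t
    · rw [Pi.single_eq_of_ne h]; exact (St i).zero_mem
  let W : FreeAbelianGroup (X × X) →+ S := FreeAbelianGroup.lift fun t => ⟨_, hwS t⟩
  let P : FreeAbelianGroup X →+ Q := FreeAbelianGroup.lift fun x => F (p x) (s (cls op x))
  let R : FreeAbelianGroup X →+ (O → G) :=
    FreeAbelianGroup.lift fun x => Pi.single (cls op x) (p x)
  let L : (O × O → ℤ) →+ (O → G) :=
    { toFun := fun n i => ∑ j, n (i, j) • e j
      map_zero' := by ext; simp
      map_add' := by intro u v; ext; simp [add_smul, Finset.sum_add_distrib] }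
  have hL : ∀ i j, L (Pi.single (i, j) 1) = Pi.single i (e j) := by
    intro i j
    funext k
    change ∑ l, _ = _
    by_cases h : k = i
    · subst h
      rw [Finset.sum_eq_single j]
      · simp
      · intro b _ hb
        rw [Pi.single_eq_of_ne (by simpa using hb)]; simp
      · simp
    · rw [Pi.single_eq_of_ne h]
      refine Finset.sum_eq_zero fun l _ => ?_
      rw [Pi.single_eq_of_ne (by simp [h])]; simp
  have hW : S.subtype.comp W = L.comp (Phi op) - R.comp (d2 op) := by
    ext t : 1
    simp only [AddMonoidHom.comp_apply, AddMonoidHom.sub_apply, W, Phi, R, d2,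
      FreeAbelianGroup.lift_apply_of, hL, map_sub, cls_op, AddSubgroup.subtype_apply]
    rw [← Pi.single_sub, ← Pi.single_sub]
    congr 1
    simp only [w]; abel
  have hE : ∀ i g h, E ⟨Pi.single i g, h⟩ = F g (s i) := by
    intro i g h
    change ∑ k, F ((Pi.single i g : O → G) k) (s k) = _
    rw [Finset.sum_eq_single i]
    · simp
    · intro b _ hb
      rw [Pi.single_eq_of_ne hb, F0]
    · simp
  have hq : q = P.comp (d2 op) + E.comp W := by
    ext t : 1
    simp only [AddMonoidHom.comp_apply, AddMonoidHom.add_apply, W, P, d2,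
      FreeAbelianGroup.lift_apply_of, map_sub, hE, cls_op]
    have h1 : F (e (cls op t.2) + p t.1) (s (cls op t.1)) =
        F (p (op t.1 t.2) + w t) (s (cls op t.1)) := by
      congr 1; simp only [w]; abel
    rw [Fadd, Fadd, hp, hw, hF] at h1
    rw [sub_add_eq_add_sub, eq_sub_iff_add_eq, add_comm, h1, add_comm]
  have hWz : W z = 0 := by
    apply Subtype.ext
    have := DFunLike.congr_fun hW z
    simpa [hz, hP] using this
  rw [hq]
  simp [hz, hWz]

/-- The permutation `(x,t) ↦ (x ◁ b, t + (x,b))`. -/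
noncomputable def piPerm (op : X → X → X) (hq : IsQuandleOp op) {Q : Type*} [AddCommGroup Q]
    (f : X → X → Q) (b : X) : Equiv.Perm (X × Q) :=
  Equiv.ofBijective (fun y => (op y.1 b, y.2 + f y.1 b)) (by
    constructor
    · rintro ⟨x, t⟩ ⟨y, u⟩ h
      simp only [Prod.mk.injEq] at h
      obtain rfl := (hq.bij b).1 h.1
      simpa using h.2
    · rintro ⟨y, u⟩
      obtain ⟨x, rfl⟩ := (hq.bij b).2 y
      exact ⟨(x, u - f x b), by simp⟩)

lemma inj [Finite X] (op : X → X → X) (hq : IsQuandleOp op)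
    (hcomm : ∀ g h : StructureGroup op, g * h = h * g)
    (z : FreeAbelianGroup (X × X)) (hz : d2 op z = 0) (hP : Phi op z = 0) :
    z ∈ (d3 op).range := by
  let Q := FreeAbelianGroup (X × X) ⧸ (d3 op).range
  let q : FreeAbelianGroup (X × X) →+ Q := QuotientAddGroup.mk' _
  let f : X → X → Q := fun a b => q (FreeAbelianGroup.of (a, b))
  have hf : ∀ a b c, f (op a b) c + f a b = f a c + f (op a c) (op b c) := by
    intro a b c
    have h : q (d3 op (FreeAbelianGroup.of (a, b, c))) = 0 :=
      (QuotientAddGroup.eq_zero_iff _).2 ⟨_, rfl⟩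
    simp only [d3, FreeAbelianGroup.lift_apply_of, map_add, map_sub] at h
    change f (op a b) c - f a c - f (op a c) (op b c) + f a b = 0 at h
    rw [← sub_eq_zero, ← h]; abel
  let π := piPerm op hq f
  have hπ : ∀ a b, π b * π a = π (op a b) * π b := by
    intro a b
    ext1 ⟨x, t⟩
    change ((op (op x a) b, t + f x a + f (op x a) b) : X × Q) =
      (op (op x b) (op a b), t + f x b + f (op x b) (op a b))
    rw [hq.sd, add_assoc, add_assoc, add_comm (f x a), hf]
  have hrel : ∀ r ∈ structureRels op, FreeGroup.lift (fun b => (π b)⁻¹) r = 1 := by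
    rintro r ⟨a, b, rfl⟩
    simp only [map_mul, map_inv, FreeGroup.lift_apply_of]
    rw [mul_inv_eq_one, ← mul_inv_rev, ← mul_inv_rev, hπ]
  let ρ : StructureGroup op →* Equiv.Perm (X × Q) := PresentedGroup.toGroup hrel
  have hρ : ∀ b, ρ (PresentedGroup.of b) = (π b)⁻¹ := fun b => PresentedGroup.toGroup.of hrel
  -- equivariance under translation
  let τ : Q → Equiv.Perm (X × Q) := fun t => Equiv.prodCongr (Equiv.refl _) (Equiv.addLeft t)
  have hτ : ∀ t g, Commute (τ t) (ρ g) := by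
    intro t g
    have hof : ∀ b, Commute (τ t) (π b) := by
      intro b
      ext1 ⟨x, u⟩
      change ((op x b, t + (u + f x b)) : X × Q) = (op x b, t + u + f x b)
      rw [add_assoc]
    have : (⊤ : Subgroup (StructureGroup op)) ≤
        (Subgroup.centralizer {τ t}).comap ρ := by
      rw [← PresentedGroup.closure_range_of, Subgroup.closure_le]
      rintro _ ⟨b, rfl⟩
      simp only [Subgroup.coe_comap, Set.mem_preimage, SetLike.mem_coe, hρ,
        Subgroup.mem_centralizer_singleton_iff]
      exact (hof b).inv_right.symm.eq
    have h := this (Subgroup.mem_top g)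
    rw [Subgroup.mem_comap, Subgroup.mem_centralizer_singleton_iff] at h
    exact Commute.symm h
  have hτ' : ∀ g x t, ρ g (x, t) = ((ρ g (x, 0)).1, t + (ρ g (x, 0)).2) := by
    intro g x t
    have := DFunLike.congr_fun (hτ t g).eq (x, 0)
    change ((ρ g (x, 0)).1, t + (ρ g (x, 0)).2) = ρ g (x, t + 0) at this
    rw [this, add_zero]
  letI : CommGroup (StructureGroup op) := { (inferInstance : Group (StructureGroup op)) with
    mul_comm := hcomm }
  have hgen : ∀ a b, (PresentedGroup.of (op a b) : StructureGroup op) = PresentedGroup.of a := by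
    intro a b
    have h : (PresentedGroup.mk (structureRels op) (FreeGroup.of a * FreeGroup.of b *
        (FreeGroup.of b * FreeGroup.of (op a b))⁻¹)) = 1 :=
      PresentedGroup.one_of_mem ⟨a, b, rfl⟩
    rw [map_mul, map_inv, mul_inv_eq_one, map_mul, map_mul, hcomm] at h
    exact (mul_left_cancel h).symm
  have hgen' : ∀ a b, orbitRel op a b →
      (PresentedGroup.of a : StructureGroup op) = PresentedGroup.of b := by
    intro a b h
    induction h with
    | rel x y h => obtain ⟨c, rfl⟩ := h; exact (hgen _ _).symm
    | refl x => rfl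
    | symm x y _ ih => exact ih.symm
    | trans x y z _ _ ih1 ih2 => exact ih1.trans ih2
  let e : Quotient (orbitSetoid op) → Additive (StructureGroup op) :=
    Quotient.lift (fun b => Additive.ofMul (PresentedGroup.of b)⁻¹)
      (fun a b h => by rw [hgen' a b h])
  have he : ∀ a b, ρ (Additive.toMul (e (cls op b))) (a, 0) = (op a b, f a b) := by
    intro a b
    change ρ (PresentedGroup.of b)⁻¹ (a, 0) = _
    rw [map_inv, hρ, inv_inv]
    change ((op a b, 0 + f a b) : X × Q) = _
    rw [zero_add]
  have hmul : ∀ (g h : Additive (StructureGroup op)) (x : X),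
      ρ (Additive.toMul (g + h)) (x, 0) = ρ (Additive.toMul g) (ρ (Additive.toMul h) (x, 0)) := by
    intro g h x
    have : ρ (Additive.toMul (g + h)) = ρ (Additive.toMul g) * ρ (Additive.toMul h) :=
      map_mul ρ (Additive.toMul g) (Additive.toMul h)
    rw [this]; rfl
  have := core op q (fun g x => (ρ (Additive.toMul g) (x, 0)).1)
    (fun g x => (ρ (Additive.toMul g) (x, 0)).2)
    (by
      intro x
      have : ρ (Additive.toMul 0) = 1 := map_one ρ
      simp only [this]; rfl)
    (by
      intro g h x
      simp only [hmul]
      rw [← Prod.mk.eta (p := ρ (Additive.toMul h) (x, 0)), hτ'])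
    (by
      intro g h x
      simp only [hmul]
      conv_lhs => rw [← Prod.mk.eta (p := ρ (Additive.toMul h) (x, 0)), hτ'])
    e (by intro a b; simp only [he]) (by intro a b; simp only [he]; rfl) z hz hP
  exact (QuotientAddGroup.eq_zero_iff _).1 this

/-- Every `e_{ij}` has a nonzero multiple in the image of the cycles. -/
lemma exists_cycle [Finite X] (op : X → X → X)
    [DecidableEq (Quotient (orbitSetoid op))] (hq : IsQuandleOp op)
    (k : Quotient (orbitSetoid op) × Quotient (orbitSetoid op)) :
    ∃ n : ℕ, n ≠ 0 ∧ ∃ z, d2 op z = 0 ∧ Phi op z = Pi.single k (n : ℤ) := by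
  classical
  obtain ⟨i, j⟩ := k
  obtain ⟨a, rfl⟩ : ∃ a, cls op a = i := Quotient.exists_rep i
  obtain ⟨b, rfl⟩ : ∃ a, cls op a = j := Quotient.exists_rep j
  let σ : Equiv.Perm X := Equiv.ofBijective _ (hq.bij b)
  have hn : 0 < orderOf σ := orderOf_pos σ
  have hc : ∀ m, cls op ((σ ^ m) a) = cls op a := by
    intro m
    induction m with
    | zero => rfl
    | succ m ih =>
      rw [pow_succ', ← ih]
      exact cls_op op _ b
  refine ⟨orderOf σ, hn.ne', ∑ m ∈ Finset.range (orderOf σ),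
    FreeAbelianGroup.of ((σ ^ m) a, b), ?_, ?_⟩
  · rw [map_sum]
    have : ∀ m, d2 op (FreeAbelianGroup.of ((σ ^ m) a, b)) =
        FreeAbelianGroup.of ((σ ^ (m + 1)) a) - FreeAbelianGroup.of ((σ ^ m) a) := by
      intro m
      simp only [d2, FreeAbelianGroup.lift_apply_of]
      rw [pow_succ']; rfl
    simp only [this]
    rw [Finset.sum_range_sub fun m => FreeAbelianGroup.of ((σ ^ m) a)]
    simp [pow_orderOf_eq_one]
  · rw [map_sum]
    simp only [Phi, FreeAbelianGroup.lift_apply_of, hc]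
    funext l
    by_cases h : l = (cls op a, cls op b)
    · subst h; simp
    · simp [Pi.single_apply, h]

end RackH2

/-- A finite quandle with `r` orbits and abelian structure group has
torsion-free second rack homology: `H₂ ≅ ℤ^{r²}`. -/
theorem H2_torsionFree_of_abelian_structureGroup {X : Type*} [Finite X]
    (op : X → X → X) (hq : IsQuandleOp op) (r : ℕ)
    (horb : Nat.card (Quotient (orbitSetoid op)) = r)
    (hcomm : ∀ g h : StructureGroup op, g * h = h * g) :
    Nonempty (H2 op ≃+ (Fin (r ^ 2) → ℤ)) := by
  classical
  let O := Quotient (orbitSetoid op)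
  haveI : Fintype O := Fintype.ofFinite O
  let φ : (d2 op).ker →+ (O × O → ℤ) := (RackH2.Phi op).comp (d2 op).ker.subtype
  have hker : (d3 op).range.addSubgroupOf (d2 op).ker = φ.ker := by
    ext z
    rw [AddSubgroup.mem_addSubgroupOf, AddMonoidHom.mem_ker]
    constructor
    · rintro ⟨t, ht⟩
      change RackH2.Phi op z.1 = 0
      rw [← ht, RackH2.Phi_d3]
    · intro h
      exact RackH2.inj op hq hcomm z.1 z.2 h
  let e1 : H2 op ≃+ φ.range :=
    (QuotientAddGroup.quotientAddEquivOfEq hker).trans (QuotientAddGroup.quotientKerEquivRange φ)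
  let N : Submodule ℤ (O × O → ℤ) := LinearMap.range φ.toIntLinearMap
  let e2 : φ.range ≃+ N := 
    { toFun := fun x => ⟨x.1, x.2⟩
      invFun := fun x => ⟨x.1, x.2⟩
      left_inv := fun _ => rfl
      right_inv := fun _ => rfl
      map_add' := fun _ _ => rfl }
  have hcard : Fintype.card (O × O) = r ^ 2 := by
    rw [Fintype.card_prod, ← Nat.card_eq_fintype_card, horb, sq]
  have hfin : Module.finrank ℤ N = r ^ 2 := by
    apply le_antisymm
    · rw [← hcard, ← Module.finrank_fintype_fun_eq_card ℤ]
      exact Submodule.finrank_le N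
    · choose n hn z hz hPz using fun k : O × O => RackH2.exists_cycle op hq k
      let v : O × O → N := fun k => ⟨Pi.single k (n k : ℤ), ⟨z k, hz k⟩, hPz k⟩
      have hv : LinearIndependent ℤ v := by
        rw [Fintype.linearIndependent_iff]
        intro g hg k
        have h := congrArg (fun x : N => x.1 k) hg
        simp only [AddSubmonoidClass.coe_finset_sum, Finset.sum_apply] at h
        rw [Finset.sum_eq_single k] at h
        · simpa [v, hn k] using h
        · intro b _ hb
          simp [v, Pi.single_apply, hb.symm]
        · simp
      have := hv.fintype_card_le_finrank
      rwa [hcard] at this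
  have e3 : N ≃ₗ[ℤ] (Fin (r ^ 2) → ℤ) :=
    LinearEquiv.ofFinrankEq _ _ (by rw [hfin]; simp)
  exact ⟨(e1.trans e2).trans e3.toAddEquiv⟩
end

section
/- Let m,n ≥ 1 be integers. The second rack homology group of the quandle U_{m,n} is H_2(U_{m,n}) ≅ ℤ⁴ × (ℤ/gcd(m,n))². -/
variable {X : Type*}

/-- The quandle `U_{n_1,…,n_r}` on `ℤ/n_1 ⊔ ⋯ ⊔ ℤ/n_r`: `a ◁ b = a` if `a, b` lie in
the same summand and `a ◁ b = a + 1` otherwise. -/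
def Uop {r : ℕ} (n : Fin r → ℕ) :
    (Σ i, ZMod (n i)) → (Σ i, ZMod (n i)) → (Σ i, ZMod (n i)) :=
  fun a b => if a.1 = b.1 then a else ⟨a.1, a.2 + 1⟩

namespace UmnAux

/-- the basic cast to `ZMod g` -/
def cst (N : Fin 2 → ℕ) (g : ℕ) (hg : ∀ i, g ∣ N i) (x : Σ i, ZMod (N i)) : ZMod g :=
  ZMod.castHom (hg x.1) (ZMod g) x.2

def phiFun (N : Fin 2 → ℕ) (g : ℕ) (hg : ∀ i, g ∣ N i)
    (p : (Σ i, ZMod (N i)) × (Σ i, ZMod (N i))) : Fin 2 → ℤ × ℤ × ZMod g :=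
  Pi.single p.1.1 (if p.1.1 = p.2.1 then (1, 0, cst N g hg p.1 - cst N g hg p.2)
    else (0, if p.1.2 + 1 = 0 then 1 else 0, cst N g hg p.2))

def phi (N : Fin 2 → ℕ) (g : ℕ) (hg : ∀ i, g ∣ N i) :
    FreeAbelianGroup ((Σ i, ZMod (N i)) × (Σ i, ZMod (N i))) →+ (Fin 2 → ℤ × ℤ × ZMod g) :=
  FreeAbelianGroup.lift (phiFun N g hg)

lemma phi_of (N : Fin 2 → ℕ) (g : ℕ) (hg : ∀ i, g ∣ N i) (p) :
    phi N g hg (FreeAbelianGroup.of p) = phiFun N g hg p := by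
  simp [phi]

lemma Uop_same (N : Fin 2 → ℕ) (i : Fin 2) (a b : ZMod (N i)) :
    Uop N ⟨i, a⟩ ⟨i, b⟩ = ⟨i, a⟩ := by simp [Uop]

lemma Uop_diff (N : Fin 2 → ℕ) (i j : Fin 2) (h : i ≠ j) (a : ZMod (N i)) (b : ZMod (N j)) :
    Uop N ⟨i, a⟩ ⟨j, b⟩ = ⟨i, a + 1⟩ := by simp [Uop, h]

lemma fin2 (i j k : Fin 2) (h : i ≠ j) (h' : i ≠ k) : j = k := by omega

lemma phiFun_same (N : Fin 2 → ℕ) (g : ℕ) (hg : ∀ i, g ∣ N i) (i : Fin 2) (a b : ZMod (N i)) :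
    phiFun N g hg (⟨i, a⟩, ⟨i, b⟩) = Pi.single i
      (1, 0, ZMod.castHom (hg i) (ZMod g) a - ZMod.castHom (hg i) (ZMod g) b) := by
  simp [phiFun, cst]

lemma phiFun_diff (N : Fin 2 → ℕ) (g : ℕ) (hg : ∀ i, g ∣ N i) (i j : Fin 2) (h : i ≠ j)
    (a : ZMod (N i)) (b : ZMod (N j)) :
    phiFun N g hg (⟨i, a⟩, ⟨j, b⟩) = Pi.single i
      (0, if a + 1 = 0 then 1 else 0, ZMod.castHom (hg j) (ZMod g) b) := by
  simp [phiFun, cst, h]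

lemma phi_d3 (N : Fin 2 → ℕ) (g : ℕ) (hg : ∀ i, g ∣ N i) (x) :
    phi N g hg (d3 (Uop N) x) = 0 := by
  suffices h : (phi N g hg).comp (d3 (Uop N)) = 0 from DFunLike.congr_fun h x
  apply FreeAbelianGroup.lift_ext
  rintro ⟨⟨i, a⟩, ⟨j, b⟩, ⟨k, c⟩⟩
  simp only [AddMonoidHom.comp_apply, d3, FreeAbelianGroup.lift_apply_of, map_add, map_sub, phi_of,
    AddMonoidHom.zero_apply]
  by_cases hij : i = j
  · subst hij
    by_cases hik : i = k
    · subst hik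
      simp [Uop_same]
    · simp only [Uop_same, Uop_diff _ _ _ hik]
      simp only [phiFun_same, phiFun_diff _ _ _ _ _ hik, ← Pi.single_sub, ← Pi.single_add,
        map_add, map_one]
      rw [Pi.single_eq_zero_iff]
      ext <;> simp
  · by_cases hik : i = k
    · subst hik
      simp only [Uop_same, Uop_diff _ _ _ hij, Uop_diff _ _ _ (Ne.symm hij)]
      simp only [phiFun_same, phiFun_diff _ _ _ _ _ hij, ← Pi.single_sub, ← Pi.single_add,
        map_add, map_one]
      rw [Pi.single_eq_zero_iff]
      ext <;> simp
    · obtain rfl := fin2 _ _ _ hij hik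
      simp only [Uop_same, Uop_diff _ _ _ hij]
      simp only [phiFun_diff _ _ _ _ _ hij, ← Pi.single_sub, ← Pi.single_add]
      rw [Pi.single_eq_zero_iff]
      ext <;> simp

section rel
variable {N : Fin 2 → ℕ} (hN : ∀ i, N i ≠ 0) {Q : Type*} [AddCommGroup Q]
  (e : (Σ i, ZMod (N i)) → (Σ i, ZMod (N i)) → Q)
  (he : ∀ a b c, e (Uop N a b) c - e a c - e (Uop N a c) (Uop N b c) + e a b = 0)

def dl (e : (Σ i, ZMod (N i)) → (Σ i, ZMod (N i)) → Q) (i : Fin 2) : Q :=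
  e ⟨i, 0⟩ ⟨i + 1, 1⟩ - e ⟨i, 0⟩ ⟨i + 1, 0⟩

lemma ne1 (i : Fin 2) : i ≠ i + 1 := by omega

include he in
lemma R2 (i : Fin 2) (a b : ZMod (N i)) :
    e ⟨i, a + 1⟩ ⟨i, b + 1⟩ = e ⟨i, a⟩ ⟨i, b⟩ := by
  have := he ⟨i, a⟩ ⟨i, b⟩ ⟨i + 1, 0⟩
  simp only [Uop_same, Uop_diff _ _ _ (ne1 i)] at this
  rw [← sub_eq_zero, ← neg_eq_zero, ← this]; abel

include he in
lemma R3 (i : Fin 2) (a c : ZMod (N i)) (b : ZMod (N (i + 1))) :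
    e ⟨i, a + 1⟩ ⟨i, c⟩ - e ⟨i, a⟩ ⟨i, c⟩ =
      e ⟨i, a⟩ ⟨i + 1, b + 1⟩ - e ⟨i, a⟩ ⟨i + 1, b⟩ := by
  have := he ⟨i, a⟩ ⟨i + 1, b⟩ ⟨i, c⟩
  simp only [Uop_same, Uop_diff _ _ _ (ne1 i), Uop_diff _ _ _ (ne1 i).symm] at this
  rw [← sub_eq_zero, ← this]; abel

include he in
lemma R4 (i : Fin 2) (a : ZMod (N i)) (b c : ZMod (N (i + 1))) :
    e ⟨i, a + 1⟩ ⟨i + 1, c⟩ - e ⟨i, a⟩ ⟨i + 1, c⟩ =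
      e ⟨i, a + 1⟩ ⟨i + 1, b⟩ - e ⟨i, a⟩ ⟨i + 1, b⟩ := by
  have := he ⟨i, a⟩ ⟨i + 1, b⟩ ⟨i + 1, c⟩
  simp only [Uop_same, Uop_diff _ _ _ (ne1 i)] at this
  rw [← sub_eq_zero, ← this]; abel

lemma exN {n : ℕ} (h : n ≠ 0) (a : ZMod n) : ∃ k : ℕ, k < n ∧ a = k := by
  have : NeZero n := ⟨h⟩
  exact ⟨a.val, a.val_lt, by simp⟩

include hN he

lemma g_step (i : Fin 2) (a : ZMod (N i)) (b : ZMod (N (i + 1))) :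
    e ⟨i, a⟩ ⟨i + 1, b + 1⟩ - e ⟨i, a⟩ ⟨i + 1, b⟩ = dl e i := by
  obtain ⟨k, -, rfl⟩ := exN (hN i) a
  rw [← R3 e he i _ 0 b, R3 e he i _ 0 0]
  induction k with
  | zero => simp [dl]
  | succ k ih =>
    rw [← ih]
    have := R4 e he i (k : ZMod (N i)) 0 (0 + 1)
    push_cast
    rw [sub_eq_sub_iff_add_eq_add] at this ⊢
    rw [this]; abel

lemma f_step (i : Fin 2) (a c : ZMod (N i)) :
    e ⟨i, a + 1⟩ ⟨i, c⟩ = e ⟨i, a⟩ ⟨i, c⟩ + dl e i := by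
  rw [← g_step hN e he i a 0, ← R3 e he i a c 0]; abel

lemma f_nat (i : Fin 2) (a c : ZMod (N i)) (k : ℕ) :
    e ⟨i, a + k⟩ ⟨i, c⟩ = e ⟨i, a⟩ ⟨i, c⟩ + k • dl e i := by
  induction k with
  | zero => simp
  | succ k ih =>
    push_cast
    rw [← add_assoc, f_step hN e he, ih, succ_nsmul, add_assoc]

lemma g_nat (i : Fin 2) (a : ZMod (N i)) (k : ℕ) :
    e ⟨i, a⟩ ⟨i + 1, k⟩ = e ⟨i, a⟩ ⟨i + 1, 0⟩ + k • dl e i := by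
  induction k with
  | zero => simp
  | succ k ih =>
    push_cast
    rw [succ_nsmul, ← add_assoc, ← ih, ← g_step hN e he i a k]; abel

lemma f_diag (i : Fin 2) (a : ZMod (N i)) : e ⟨i, a⟩ ⟨i, a⟩ = e ⟨i, 0⟩ ⟨i, 0⟩ := by
  obtain ⟨k, -, rfl⟩ := exN (hN i) a
  induction k with
  | zero => simp
  | succ k ih => push_cast; rw [R2 e he, ih]

lemma dl_tor (i : Fin 2) : (Nat.gcd (N 0) (N 1)) • dl e i = 0 := by
  have h1 : N i • dl e i = 0 := by simpa using f_nat hN e he i 0 0 (N i)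
  have h2 : N (i + 1) • dl e i = 0 := by simpa using g_nat hN e he i 0 (N (i + 1))
  rw [← addOrderOf_dvd_iff_nsmul_eq_zero] at *
  fin_cases i
  · exact Nat.dvd_gcd h1 h2
  · exact Nat.dvd_gcd h2 h1

end rel

section main
variable {N : Fin 2 → ℕ} {Q : Type*} [AddCommGroup Q]
  (e : (Σ i, ZMod (N i)) → (Σ i, ZMod (N i)) → Q)

def theta (g : ℕ) (hd : ∀ i, g • dl e i = 0) (i : Fin 2) : ℤ × ℤ × ZMod g →+ Q :=
  (zmultiplesHom Q (e ⟨i, 0⟩ ⟨i, 0⟩)).coprod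
    ((zmultiplesHom Q (∑ k ∈ Finset.range (N i), e ⟨i, k⟩ ⟨i + 1, 0⟩)).coprod
      (ZMod.lift g ⟨zmultiplesHom Q (dl e i), by simpa using hd i⟩))

def psi (g : ℕ) (hd : ∀ i, g • dl e i = 0) : (Fin 2 → ℤ × ℤ × ZMod g) →+ Q :=
  ∑ i, (theta e g hd i).comp (Pi.evalAddMonoidHom _ i)

lemma psi_single (g : ℕ) (hd : ∀ i, g • dl e i = 0) (i : Fin 2) (w) :
    psi e g hd (Pi.single i w) = theta e g hd i w := by
  fin_cases i <;> simp [psi, Fin.sum_univ_two]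

lemma theta_nat (g : ℕ) (hd : ∀ i, g • dl e i = 0) (i : Fin 2) (p q : ℤ) (k : ℕ) :
    theta e g hd i (p, q, (k : ZMod g)) = p • e ⟨i, 0⟩ ⟨i, 0⟩
      + (q • (∑ k ∈ Finset.range (N i), e ⟨i, k⟩ ⟨i + 1, 0⟩) + k • dl e i) := by
  have : (k : ZMod g) = ((k : ℤ) : ZMod g) := by simp
  simp only [theta, AddMonoidHom.coprod_apply, this, ZMod.lift_coe]
  simp

def hfun (x : Σ i, ZMod (N i)) : Q :=
  ∑ k ∈ Finset.range x.2.val, e ⟨x.1, k⟩ ⟨x.1 + 1, 0⟩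

lemma h_step (hN : ∀ i, N i ≠ 0) (i : Fin 2) (a : ZMod (N i)) :
    (if a + 1 = 0 then (1 : ℤ) else 0) • (∑ k ∈ Finset.range (N i), e ⟨i, k⟩ ⟨i + 1, 0⟩)
      + (hfun e ⟨i, a + 1⟩ - hfun e ⟨i, a⟩) = e ⟨i, a⟩ ⟨i + 1, 0⟩ := by
  obtain ⟨k, hk, rfl⟩ := exN (hN i) a
  have hv : ((k : ZMod (N i))).val = k := ZMod.val_cast_of_lt hk
  by_cases h : k + 1 = N i
  · have h0 : (k : ZMod (N i)) + 1 = 0 := by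
      have : ((k + 1 : ℕ) : ZMod (N i)) = 0 := by rw [h]; simp
      simpa using this
    simp only [h0, hfun, hv, ZMod.val_zero, if_true]
    rw [show Finset.range (N i) = Finset.range (k + 1) by rw [h], Finset.sum_range_succ]
    simp
  · have hlt : k + 1 < N i := by omega
    have hv1 : ((k : ZMod (N i)) + 1).val = k + 1 := by
      have := ZMod.val_cast_of_lt hlt
      simpa using this
    have h0 : (k : ZMod (N i)) + 1 ≠ 0 := by
      intro h0; rw [h0] at hv1; simp at hv1
    simp only [h0, hfun, hv, hv1, if_false]
    rw [Finset.sum_range_succ]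
    simp

/-- the decomposition of every generator -/
lemma decomp (hN : ∀ i, N i ≠ 0)
    (he : ∀ a b c, e (Uop N a b) c - e a c - e (Uop N a c) (Uop N b c) + e a b = 0)
    (g : ℕ) (hg : ∀ i, g ∣ N i) (hd : ∀ i, g • dl e i = 0) (x y : Σ i, ZMod (N i)) :
    e x y = psi e g hd (phiFun N g hg (x, y)) + (hfun e (Uop N x y) - hfun e x) := by
  obtain ⟨i, a⟩ := x
  obtain ⟨j, b⟩ := y
  by_cases hij : i = j
  · subst hij
    obtain ⟨k, -, hk⟩ := exN (hN i) (a - b)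
    obtain rfl : a = b + k := by rw [← hk]; abel
    simp only [phiFun, Uop_same, psi_single, if_true, cst, map_add, map_natCast,
      add_sub_cancel_left, theta_nat]
    rw [f_nat hN e he, f_diag hN e he]
    simp
  · obtain rfl := fin2 _ _ _ hij (ne1 i)
    obtain ⟨k, -, rfl⟩ := exN (hN _) b
    simp only [phiFun, Uop_diff _ _ _ hij, psi_single, hij, if_false, cst, map_natCast, theta_nat]
    rw [g_nat hN e he, ← h_step e hN i a]
    simp only [zero_smul, zero_add]
    abel
end main

lemma ker_le (N : Fin 2 → ℕ) (hN : ∀ i, N i ≠ 0) (g : ℕ) (hgd : g = Nat.gcd (N 0) (N 1))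
    (hg : ∀ i, g ∣ N i) (x) (h2 : d2 (Uop N) x = 0) (hp : phi N g hg x = 0) :
    x ∈ (d3 (Uop N)).range := by
  set π := QuotientAddGroup.mk' (d3 (Uop N)).range with hπ
  let e : (Σ i, ZMod (N i)) → (Σ i, ZMod (N i)) → _ := fun a b => π (FreeAbelianGroup.of (a, b))
  have he : ∀ a b c, e (Uop N a b) c - e a c - e (Uop N a c) (Uop N b c) + e a b = 0 := by
    intro a b c
    simp only [e, ← map_sub, ← map_add]
    rw [← AddMonoidHom.mem_ker, hπ, QuotientAddGroup.ker_mk']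
    exact ⟨FreeAbelianGroup.of (a, b, c), by simp [d3]⟩
  have hd : ∀ i, g • dl e i = 0 := by subst hgd; exact dl_tor hN e he
  have key : π = (psi e g hd).comp (phi N g hg)
      + (FreeAbelianGroup.lift (hfun e)).comp (d2 (Uop N)) := by
    apply FreeAbelianGroup.lift_ext
    rintro ⟨a, b⟩
    have := decomp e hN he g hg hd a b
    simp only [AddMonoidHom.add_apply, AddMonoidHom.comp_apply, phi_of, d2,
      FreeAbelianGroup.lift_apply_of, map_sub]
    exact this
  have h0 : π x = 0 := by
    rw [key]; simp [h2, hp]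
  rwa [← AddMonoidHom.mem_ker, hπ, QuotientAddGroup.ker_mk'] at h0

lemma tele (N : Fin 2 → ℕ) (i : Fin 2) (K : ℕ) :
    d2 (Uop N) (∑ k ∈ Finset.range K,
      FreeAbelianGroup.of ((⟨i, (k : ZMod (N i))⟩ : Σ i, ZMod (N i)), ⟨i + 1, 0⟩))
    = FreeAbelianGroup.of ⟨i, (K : ZMod (N i))⟩ - FreeAbelianGroup.of ⟨i, 0⟩ := by
  induction K with
  | zero => simp
  | succ K ih =>
    rw [Finset.sum_range_succ, map_add, ih]
    simp [d2, Uop_diff _ _ _ (ne1 i)]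

lemma phi_surj (N : Fin 2 → ℕ) (hN : ∀ i, N i ≠ 0) (g : ℕ) (hg : ∀ i, g ∣ N i)
    (v : Fin 2 → ℤ × ℤ × ZMod g) : ∃ x, d2 (Uop N) x = 0 ∧ phi N g hg x = v := by
  have hF : ∀ i : Fin 2, ∃ x, d2 (Uop N) x = 0 ∧ phi N g hg x = Pi.single i (1, 0, 0) := fun i =>
    ⟨FreeAbelianGroup.of (⟨i, 0⟩, ⟨i, 0⟩), by simp [d2, Uop_same], by simp [phi_of, phiFun]⟩
  have hS : ∀ i : Fin 2, ∃ x, d2 (Uop N) x = 0 ∧ phi N g hg x = Pi.single i (0, 1, 0) := fun i => by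
    refine ⟨∑ k ∈ Finset.range (N i), FreeAbelianGroup.of (⟨i, k⟩, ⟨i + 1, 0⟩),
      by rw [tele]; simp, ?_⟩
    obtain ⟨M, hM⟩ := Nat.exists_eq_succ_of_ne_zero (hN i)
    have h1 : ∀ k ∈ Finset.range M, phi N g hg (FreeAbelianGroup.of
        ((⟨i, (k : ZMod (N i))⟩ : Σ i, ZMod (N i)), ⟨i + 1, 0⟩)) = 0 := by
      intro k hk
      have hk' := Finset.mem_range.1 hk
      have h0 : (k : ZMod (N i)) + 1 ≠ 0 := by
        intro h0
        have hc : ((k + 1 : ℕ) : ZMod (N i)) = 0 := by simpa using h0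
        rw [ZMod.natCast_eq_zero_iff] at hc
        have := Nat.le_of_dvd (by omega) hc
        omega
      simp only [phi_of, phiFun, ne1 i, if_false, h0, cst, map_zero]
      exact Pi.single_zero i
    have h0 : (M : ZMod (N i)) + 1 = 0 := by
      have : ((M + 1 : ℕ) : ZMod (N i)) = 0 := by
        rw [ZMod.natCast_eq_zero_iff]; exact dvd_of_eq hM
      simpa using this
    rw [show Finset.range (N i) = Finset.range (M + 1) by rw [hM], Finset.sum_range_succ, map_add,
      map_sum, Finset.sum_eq_zero h1, zero_add]
    simp only [phi_of, phiFun, ne1 i, if_false, h0, cst, map_zero, if_true]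
  have hD : ∀ i : Fin 2, ∃ x, d2 (Uop N) x = 0 ∧ phi N g hg x = Pi.single i (0, 0, 1) := fun i => by
    refine ⟨FreeAbelianGroup.of (⟨i, 0⟩, ⟨i + 1, 1⟩) - FreeAbelianGroup.of (⟨i, 0⟩, ⟨i + 1, 0⟩),
      by simp [d2, Uop_diff _ _ _ (ne1 i)], ?_⟩
    simp only [map_sub, phi_of, phiFun, ne1 i, if_false, cst, map_zero, map_one, ← Pi.single_sub]
    simp
  choose F hF1 hF2 using hF
  choose S hS1 hS2 using hS
  choose D hD1 hD2 using hD
  have hr : ∀ i, ∃ r : ℤ, (r : ZMod g) = (v i).2.2 := fun i => ZMod.intCast_surjective _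
  choose r hr using hr
  refine ⟨∑ i, ((v i).1 • F i + (v i).2.1 • S i + r i • D i), ?_, ?_⟩
  · simp [hF1, hS1, hD1]
  · simp only [map_sum, map_add, map_zsmul, hF2, hS2, hD2]
    rw [← Finset.univ_sum_single v]
    refine Finset.sum_congr rfl fun i _ => ?_
    rw [← Pi.single_smul, ← Pi.single_smul, ← Pi.single_smul, ← Pi.single_add, ← Pi.single_add]
    congr 1
    ext <;> simp [hr]

def tgt (g : ℕ) : (Fin 2 → ℤ × ℤ × ZMod g) ≃+ (Fin 4 → ℤ) × (ZMod g × ZMod g) where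
  toFun v := (![(v 0).1, (v 0).2.1, (v 1).1, (v 1).2.1], ((v 0).2.2, (v 1).2.2))
  invFun w := ![(w.1 0, w.1 1, w.2.1), (w.1 2, w.1 3, w.2.2)]
  left_inv v := by ext i <;> fin_cases i <;> simp
  right_inv w := by
    ext i
    · fin_cases i <;> simp
    · simp
    · simp
  map_add' v w := by
    ext i
    · fin_cases i <;> simp
    · simp
    · simp

lemma general (N : Fin 2 → ℕ) (hN : ∀ i, N i ≠ 0) (g : ℕ) (hgd : g = Nat.gcd (N 0) (N 1))
    (hg : ∀ i, g ∣ N i) :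
    Nonempty (H2 (Uop N) ≃+ (Fin 4 → ℤ) × (ZMod g × ZMod g)) := by
  let f := (phi N g hg).comp (d2 (Uop N)).ker.subtype
  have hs : Function.Surjective f := fun v => by
    obtain ⟨x, h1, h2⟩ := phi_surj N hN g hg v
    exact ⟨⟨x, h1⟩, h2⟩
  have hk : (d3 (Uop N)).range.addSubgroupOf (d2 (Uop N)).ker = f.ker := by
    ext ⟨x, hx⟩
    rw [AddSubgroup.mem_addSubgroupOf, AddMonoidHom.mem_ker]
    constructor
    · rintro ⟨y, hy⟩
      change phi N g hg x = 0
      change d3 (Uop N) y = x at hy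
      rw [← hy, phi_d3]
    · intro h
      exact ker_le N hN g hgd hg x hx h
  exact ⟨(QuotientAddGroup.quotientAddEquivOfEq hk).trans
    ((QuotientAddGroup.quotientKerEquivOfSurjective f hs).trans (tgt g))⟩

end UmnAux

/-- `H₂(U_{m,n}) ≅ ℤ⁴ × (ℤ/gcd(m,n))²`. -/
theorem H2_Umn (m n : ℕ) (hm : 1 ≤ m) (hn : 1 ≤ n) :
    Nonempty (H2 (Uop ![m, n]) ≃+
      (Fin 4 → ℤ) × (ZMod (Nat.gcd m n) × ZMod (Nat.gcd m n))) := by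
  refine UmnAux.general ![m, n] ?_ _ rfl ?_
  · intro i; fin_cases i
    · exact Nat.one_le_iff_ne_zero.1 hm
    · exact Nat.one_le_iff_ne_zero.1 hn
  · intro i; fin_cases i
    · exact Nat.gcd_dvd_left m n
    · exact Nat.gcd_dvd_right m n
end

section
/- Let (X,◁) be a finite abelian quandle and let O be an orbit of (X,◁) with n elements. Then every torsion element z of the orbit component H_{2;O}(X,◁) of the second rack homology group satisfies n² · z = 0; in other words, the order of any element of the torsion subgroup of H_{2;O}(X,◁) divides n². -/
variable {X : Type*}

/-- Chains in degree 2 whose first coordinate lies in `O`. -/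
def orbC2 (O : Set X) : AddSubgroup (FreeAbelianGroup (X × X)) :=
  AddSubgroup.closure {z | ∃ p : X × X, p.1 ∈ O ∧ z = FreeAbelianGroup.of p}

/-- Chains in degree 3 whose first coordinate lies in `O`. -/
def orbC3 (O : Set X) : AddSubgroup (FreeAbelianGroup (X × X × X)) :=
  AddSubgroup.closure {z | ∃ t : X × X × X, t.1 ∈ O ∧ z = FreeAbelianGroup.of t}

/-- The orbit component `H_{2;O} = (ker d₂ ∩ ℤ(O×X)) / d₃(ℤ(O×X×X))` of `H₂`. -/
abbrev H2Orb (op : X → X → X) (O : Set X) : Type _ :=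
  ↥((d2 op).ker ⊓ orbC2 O) ⧸
    (((orbC3 O).map (d3 op)).addSubgroupOf ((d2 op).ker ⊓ orbC2 O))


namespace AbQ

open FreeAbelianGroup

variable {op : X → X → X}

/-- Right translation as a permutation. -/
noncomputable def rho (hq : IsQuandleOp op) (c : X) : Equiv.Perm X :=
  Equiv.ofBijective _ (hq.bij c)

@[simp] lemma rho_apply (hq : IsQuandleOp op) (c b : X) : rho hq c b = op b c := rfl

/-- The inner group. -/
noncomputable def inn (hq : IsQuandleOp op) : Subgroup (Equiv.Perm X) :=
  Subgroup.closure (Set.range (rho hq))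

lemma op_op_right (hq : IsQuandleOp op) (hab : IsAbelianOp op) (a b c : X) :
    op a (op b c) = op a b := by
  obtain ⟨a', rfl⟩ := (hq.bij c).2 a
  show op (op a' c) (op b c) = op (op a' c) b
  rw [← hq.sd, hab]

lemma orb_op (b c : X) : orbitRel op b (op b c) := Relation.EqvGen.rel _ _ ⟨c, rfl⟩

lemma inn_comm (hq : IsQuandleOp op) (hab : IsAbelianOp op) {h : Equiv.Perm X}
    (hh : h ∈ inn hq) : ∀ b x, h (op b x) = op (h b) x := by
  induction hh using Subgroup.closure_induction with
  | mem g hg =>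
    obtain ⟨c, rfl⟩ := hg
    intro b x
    simp [hab b x c]
  | one => intro b x; rfl
  | mul g k _ _ ihg ihk => intro b x; simp [ihg, ihk]
  | inv g _ ih =>
    intro b x
    apply g.injective
    rw [ih]; simp

lemma inn_comm2 (hq : IsQuandleOp op) (hab : IsAbelianOp op) {h k : Equiv.Perm X}
    (hh : h ∈ inn hq) (hk : k ∈ inn hq) : ∀ b, h (k b) = k (h b) := by
  induction hk using Subgroup.closure_induction with
  | mem g hg =>
    obtain ⟨c, rfl⟩ := hg
    intro b
    simp [inn_comm hq hab hh]
  | one => intro b; rfl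
  | mul g k _ _ ihg ihk => intro b; simp [ihg, ihk]
  | inv g _ ih =>
    intro b
    apply g.injective
    rw [← ih]; simp

lemma inn_orb (hq : IsQuandleOp op) {h : Equiv.Perm X}
    (hh : h ∈ inn hq) : ∀ b, orbitRel op b (h b) := by
  induction hh using Subgroup.closure_induction with
  | mem g hg =>
    obtain ⟨c, rfl⟩ := hg
    intro b
    exact orb_op b c
  | one => intro b; exact Relation.EqvGen.refl _
  | mul g k _ _ ihg ihk => intro b; exact (ihk b).trans _ _ _ (ihg (k b))
  | inv g _ ih =>
    intro b
    have := ih (g⁻¹ b)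
    rw [show g (g⁻¹ b) = b from g.apply_symm_apply b] at this
    exact this.symm

lemma exists_inn (hq : IsQuandleOp op) {b c : X} (h : orbitRel op b c) :
    ∃ g ∈ inn hq, g b = c := by
  induction h with
  | rel x y h =>
    obtain ⟨c, rfl⟩ := h
    exact ⟨rho hq c, Subgroup.subset_closure ⟨c, rfl⟩, rfl⟩
  | refl x => exact ⟨1, one_mem _, rfl⟩
  | symm x y _ ih =>
    obtain ⟨g, hg, rfl⟩ := ih
    exact ⟨g⁻¹, inv_mem hg, by simp⟩
  | trans x y z _ _ ih1 ih2 =>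
    obtain ⟨g, hg, rfl⟩ := ih1
    obtain ⟨k, hk, rfl⟩ := ih2
    exact ⟨k * g, mul_mem hk hg, rfl⟩

/-- Every inner permutation has order dividing the size of the orbit. -/
lemma pow_card_apply (hq : IsQuandleOp op) (hab : IsAbelianOp op) (a : X)
    {h : Equiv.Perm X} (hh : h ∈ inn hq) {b : X} (hb : orbitRel op a b) :
    (h ^ Nat.card {x | orbitRel op a x}) b = b := by
  have horb : MulAction.orbit (inn hq) a = {x | orbitRel op a x} := by
    ext x
    constructor
    · rintro ⟨g, rfl⟩
      exact inn_orb hq g.2 a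
    · intro hx
      obtain ⟨g, hg, rfl⟩ := exists_inn hq hx
      exact ⟨⟨g, hg⟩, rfl⟩
  have hnorm : (MulAction.stabilizer (inn hq) a).Normal := by
    constructor
    intro k hk g
    have : g * k * g⁻¹ = k := by
      rw [mul_inv_eq_iff_eq_mul]
      apply Subtype.ext
      ext x
      exact inn_comm2 hq hab g.2 k.2 x
    rwa [this]
  have h1 := (MulAction.stabilizer (inn hq) a).pow_index_mem ⟨h, hh⟩
  rw [MulAction.index_stabilizer, horb, MulAction.mem_stabilizer_iff] at h1
  have h2 : (h ^ Nat.card {x | orbitRel op a x}) a = a := h1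
  obtain ⟨g, hg, rfl⟩ := exists_inn hq hb
  rw [inn_comm2 hq hab (pow_mem hh _) hg, h2]

/-- Translation of the first coordinate. -/
noncomputable def T (h : Equiv.Perm X) :
    FreeAbelianGroup (X × X) →+ FreeAbelianGroup (X × X) :=
  FreeAbelianGroup.map fun p => (h p.1, p.2)

@[simp] lemma T_of (h : Equiv.Perm X) (p : X × X) : T h (of p) = of (h p.1, p.2) := by
  simp [T, map_of_apply]

lemma T_mul (h k : Equiv.Perm X) (z : FreeAbelianGroup (X × X)) :
    T (h * k) z = T h (T k z) := by
  have : T (h * k) = (T h).comp (T k) := by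
    apply lift_ext; intro x; simp
  rw [this]; rfl

lemma T_one (z : FreeAbelianGroup (X × X)) : T 1 z = z := by
  have : T (1 : Equiv.Perm X) = AddMonoidHom.id _ := by
    apply lift_ext; intro x; simp
  rw [this]; rfl

@[simp] lemma d2_of (p : X × X) : d2 op (of p) = of (op p.1 p.2) - of p.1 := by
  simp [d2]

@[simp] lemma d3_of (x y z : X) : d3 op (of (x, y, z)) =
    of (op x y, z) - of (x, z) - of (op x z, op y z) + of (x, y) := by
  simp [d3]

/-- Induction principle: a homomorphism maps `orbC2` into `B` if generators go there. -/
lemma orbC2_ind {A : Type*} [AddCommGroup A] {O : Set X} (B : AddSubgroup A)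
    (f : FreeAbelianGroup (X × X) →+ A) (hf : ∀ b x, b ∈ O → f (of (b, x)) ∈ B)
    {z : FreeAbelianGroup (X × X)} (hz : z ∈ orbC2 O) : f z ∈ B := by
  have : orbC2 O ≤ B.comap f := by
    refine (AddSubgroup.closure_le _).2 ?_
    rintro _ ⟨⟨b, x⟩, hb, rfl⟩
    exact hf b x hb
  exact this hz

lemma d3_mem {O : Set X} {b x y : X} (hb : b ∈ O) :
    d3 op (of (b, x, y)) ∈ (orbC3 O).map (d3 op) :=
  ⟨_, AddSubgroup.subset_closure ⟨_, hb, rfl⟩, rfl⟩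

/-- The cycles in the orbit `O`. -/
lemma T_mem (hq : IsQuandleOp op) (hab : IsAbelianOp op) (a : X) {h : Equiv.Perm X}
    (hh : h ∈ inn hq) {z : FreeAbelianGroup (X × X)}
    (hz : z ∈ (d2 op).ker ⊓ orbC2 {x | orbitRel op a x}) :
    T h z ∈ (d2 op).ker ⊓ orbC2 {x | orbitRel op a x} := by
  obtain ⟨hz1, hz2⟩ := hz
  constructor
  · have : (d2 op).comp (T h) = (FreeAbelianGroup.map h).comp (d2 op) := by
      apply lift_ext; intro x
      simp [map_of_apply, inn_comm hq hab hh]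
    have h2 := DFunLike.congr_fun this z
    simp only [AddMonoidHom.comp_apply] at h2
    show d2 op (T h z) = 0
    rw [h2, show d2 op z = 0 from hz1, map_zero]
  · refine orbC2_ind _ (T h) ?_ hz2
    intro b x hb
    rw [T_of]
    exact AddSubgroup.subset_closure ⟨(h b, x),
      Relation.EqvGen.trans _ _ _ hb (inn_orb hq hh b), rfl⟩

/-- Key identity: `(T_d - 1)(T_c - 1)` kills the homology of the orbit. -/
lemma key (hq : IsQuandleOp op) (hab : IsAbelianOp op) (a : X) (c d : X)
    {z : FreeAbelianGroup (X × X)}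
    (hz : z ∈ (d2 op).ker ⊓ orbC2 {x | orbitRel op a x}) :
    T (rho hq d) (T (rho hq c) z) - T (rho hq d) z - (T (rho hq c) z - z) ∈
      (orbC3 {x | orbitRel op a x}).map (d3 op) := by
  obtain ⟨hz1, hz2⟩ := hz
  have hz1 : d2 op z = 0 := hz1
  let Φ : FreeAbelianGroup X →+ FreeAbelianGroup (X × X) :=
    FreeAbelianGroup.lift fun b => of (op b d, c) - of (b, c)
  let f : FreeAbelianGroup (X × X) →+ FreeAbelianGroup (X × X) :=
    (T (rho hq d)).comp (T (rho hq c)) - T (rho hq d) - (T (rho hq c) - AddMonoidHom.id _)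
      - Φ.comp (d2 op)
  have hf : f z = T (rho hq d) (T (rho hq c) z) - T (rho hq d) z - (T (rho hq c) z - z) := by
    simp [f, hz1]
  rw [← hf]
  refine orbC2_ind _ f ?_ hz2
  intro b x hb
  have hbx : op b x ∈ {x | orbitRel op a x} := Relation.EqvGen.trans _ _ _ hb (orb_op b x)
  have hbd : op b d ∈ {x | orbitRel op a x} := Relation.EqvGen.trans _ _ _ hb (orb_op b d)
  have e : f (of (b, x)) = d3 op (of (op b d, c, x)) - d3 op (of (b, c, x))
      + d3 op (of (op b x, d, op c x)) - d3 op (of (op b x, d, c)) := by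
    simp only [f, Φ, AddMonoidHom.sub_apply, AddMonoidHom.comp_apply, T_of, d2_of, map_sub,
      lift_apply_of, d3_of, rho_apply, AddMonoidHom.id_apply, op_op_right hq hab]
    rw [hab b c d, hab b x d]
    abel
  rw [e]
  exact sub_mem (add_mem (sub_mem (d3_mem hbd) (d3_mem hb)) (d3_mem hbx)) (d3_mem hbx)

lemma T_pow (hq : IsQuandleOp op) (hab : IsAbelianOp op) (a : X) (c : X) (k : ℕ) :
    ∀ z ∈ (d2 op).ker ⊓ orbC2 {x | orbitRel op a x},
    T (rho hq c ^ k) z - z - k • (T (rho hq c) z - z) ∈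
      (orbC3 {x | orbitRel op a x}).map (d3 op) := by
  induction k with
  | zero => intro z hz; simp [T_one]
  | succ k ih =>
    intro z hz
    have h1 := ih _ (T_mem hq hab a (Subgroup.subset_closure ⟨c, rfl⟩) hz)
    have h2 := AddSubgroup.nsmul_mem _ (key hq hab a c c hz) k
    convert add_mem h1 h2 using 1
    rw [pow_succ, T_mul, succ_nsmul]
    simp only [nsmul_sub]
    abel

lemma T_inn (hq : IsQuandleOp op) (hab : IsAbelianOp op) (a : X) {h : Equiv.Perm X}
    (hh : h ∈ inn hq) :
    ∀ z ∈ (d2 op).ker ⊓ orbC2 {x | orbitRel op a x},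
    Nat.card {x | orbitRel op a x} • (T h z - z) ∈
      (orbC3 {x | orbitRel op a x}).map (d3 op) := by
  induction hh using Subgroup.closure_induction with
  | mem g hg =>
    obtain ⟨c, rfl⟩ := hg
    intro z hz
    have h1 := T_pow hq hab a c (Nat.card {x | orbitRel op a x}) z hz
    have h2 : T (rho hq c ^ Nat.card {x | orbitRel op a x}) z - z = 0 := by
      have := orbC2_ind (⊥ : AddSubgroup (FreeAbelianGroup (X × X)))
        (T (rho hq c ^ Nat.card {x | orbitRel op a x}) - AddMonoidHom.id _) ?_ hz.2
      · exact this
      · intro b x hb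
        rw [AddMonoidHom.sub_apply, T_of,
          pow_card_apply hq hab a (Subgroup.subset_closure ⟨c, rfl⟩) hb]
        simp
    rw [h2, zero_sub] at h1
    exact neg_mem_iff.1 h1
  | one => intro z hz; simp [T_one]
  | mul g k hg hk ihg ihk =>
    intro z hz
    have := add_mem (ihg _ (T_mem hq hab a hk hz)) (ihk z hz)
    convert this using 1
    rw [T_mul, ← nsmul_add]
    congr 1
    abel
  | inv g hg ih =>
    intro z hz
    have := neg_mem (ih _ (T_mem hq hab a (inv_mem hg) hz))
    convert this using 1
    rw [← T_mul, mul_inv_cancel, T_one, ← smul_neg, neg_sub]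

lemma eq_zero_of_nsmul {Y : Type*} {m : ℕ} (hm : 0 < m) {y : FreeAbelianGroup Y}
    (h : m • y = 0) : y = 0 := by
  apply (FreeAbelianGroup.equivFinsupp Y).injective
  have h1 := congrArg (FreeAbelianGroup.equivFinsupp Y) h
  rw [map_nsmul, map_zero] at h1
  rw [map_zero]
  ext i
  have h2 := DFunLike.congr_fun h1 i
  simpa [hm.ne'] using h2

/-- Summation over the orbit kills torsion. -/
lemma norm_mem [Fintype X] {a : X} [DecidablePred (orbitRel op a)] (hq : IsQuandleOp op) {m : ℕ}
    (hm : 0 < m) {z : FreeAbelianGroup (X × X)} (hz : z ∈ orbC2 {x | orbitRel op a x})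
    (hmz : m • z ∈ (orbC3 {x | orbitRel op a x}).map (d3 op)) :
    FreeAbelianGroup.lift (fun p : X × X =>
      ∑ b ∈ Finset.univ.filter (orbitRel op a), of (b, p.2)) z ∈
      (orbC3 {x | orbitRel op a x}).map (d3 op) := by
  set B := (orbC3 {x | orbitRel op a x}).map (d3 op) with hB
  let φ : FreeAbelianGroup (X × X) →+ FreeAbelianGroup (Quotient (orbitSetoid op)) :=
    FreeAbelianGroup.map fun p => Quotient.mk _ p.2
  have hφB : B ≤ φ.ker := by
    rw [hB, AddSubgroup.map_le_iff_le_comap]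
    refine (AddSubgroup.closure_le _).2 ?_
    rintro _ ⟨⟨b, x, y⟩, hb, rfl⟩
    have : (Quotient.mk (orbitSetoid op) (op x y)) = Quotient.mk _ x :=
      Quotient.sound (Relation.EqvGen.symm _ _ (orb_op x y))
    simp [φ, map_of_apply, this]
  have hφ : φ z = 0 := by
    apply eq_zero_of_nsmul hm
    rw [← map_nsmul]
    exact hφB hmz
  let s : X → FreeAbelianGroup (X × X) ⧸ B := fun x =>
    QuotientAddGroup.mk' B (∑ b ∈ Finset.univ.filter (orbitRel op a), of (b, x))
  have hs : ∀ x y, orbitRel op x y → s x = s y := by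
    intro x y hxy
    induction hxy with
    | rel x y h =>
      obtain ⟨c, rfl⟩ := h
      have e : ∑ b ∈ Finset.univ.filter (orbitRel op a), of (b, x)
          - ∑ b ∈ Finset.univ.filter (orbitRel op a), of (b, op x c)
          = ∑ b ∈ Finset.univ.filter (orbitRel op a), d3 op (of (b, x, c)) := by
        have perm : ∀ u v : X, ∑ b ∈ Finset.univ.filter (orbitRel op a), of (op b v, u)
            = ∑ b ∈ Finset.univ.filter (orbitRel op a), of (b, u) := by
          intro u v
          refine Finset.sum_equiv (rho hq v) ?_ ?_
          · intro i
            simp only [Finset.mem_filter, Finset.mem_univ, true_and, rho_apply]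
            exact ⟨fun h => Relation.EqvGen.trans _ _ _ h (orb_op i v),
              fun h => Relation.EqvGen.trans _ _ _ h (Relation.EqvGen.symm _ _ (orb_op i v))⟩
          · intro i _; rfl
        simp only [d3_of, Finset.sum_add_distrib, Finset.sum_sub_distrib, perm]
        abel
      rw [← sub_eq_zero, ← map_sub, e]
      refine (QuotientAddGroup.eq_zero_iff _).2 ?_
      refine sum_mem fun b hb => d3_mem ?_
      simpa using hb
    | refl x => rfl
    | symm x y _ ih => exact ih.symm
    | trans x y w _ _ ih1 ih2 => exact ih1.trans ih2
  let ν : FreeAbelianGroup (Quotient (orbitSetoid op)) →+ FreeAbelianGroup (X × X) ⧸ B :=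
    FreeAbelianGroup.lift (Quotient.lift s hs)
  have hν : (QuotientAddGroup.mk' B).comp (FreeAbelianGroup.lift (fun p : X × X =>
      ∑ b ∈ Finset.univ.filter (orbitRel op a), of (b, p.2))) = ν.comp φ := by
    apply lift_ext
    intro p
    simp only [AddMonoidHom.comp_apply, lift_apply_of, φ, ν, map_of_apply]
    rfl
  have h3 := DFunLike.congr_fun hν z
  simp only [AddMonoidHom.comp_apply, hφ, map_zero] at h3
  exact (QuotientAddGroup.eq_zero_iff _).1 h3

/-- The chain-level statement. -/
lemma main [Finite X] (hq : IsQuandleOp op) (hab : IsAbelianOp op) (a : X) {m : ℕ}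
    (hm : 0 < m) {z : FreeAbelianGroup (X × X)}
    (hz : z ∈ (d2 op).ker ⊓ orbC2 {x | orbitRel op a x})
    (hmz : m • z ∈ (orbC3 {x | orbitRel op a x}).map (d3 op)) :
    (Nat.card {x | orbitRel op a x}) ^ 2 • z ∈ (orbC3 {x | orbitRel op a x}).map (d3 op) := by
  classical
  have := Fintype.ofFinite X
  have hN := norm_mem hq hm hz.2 hmz
  choose! g hg hga using fun b (hb : orbitRel op a b) => exists_inn hq hb
  have e : FreeAbelianGroup.lift (fun p : X × X =>
      ∑ b ∈ Finset.univ.filter (orbitRel op a), of (b, p.2)) z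
      = ∑ b ∈ Finset.univ.filter (orbitRel op a), T (g b) z := by
    rw [← sub_eq_zero]
    have := orbC2_ind (⊥ : AddSubgroup (FreeAbelianGroup (X × X)))
      (FreeAbelianGroup.lift (fun p : X × X =>
        ∑ b ∈ Finset.univ.filter (orbitRel op a), of (b, p.2))
        - ∑ b ∈ Finset.univ.filter (orbitRel op a), T (g b)) ?_ hz.2
    · simpa using this
    · intro b x hb
      obtain ⟨k, hk, rfl⟩ := exists_inn hq hb
      rw [AddSubgroup.mem_bot, AddMonoidHom.sub_apply, sub_eq_zero, lift_apply_of,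
        AddMonoidHom.finsetSum_apply]
      symm
      refine Finset.sum_equiv k ?_ ?_
      · intro i
        simp only [Finset.mem_filter, Finset.mem_univ, true_and]
        exact ⟨fun h => Relation.EqvGen.trans _ _ _ h (inn_orb hq hk i),
          fun h => Relation.EqvGen.trans _ _ _ h (Relation.EqvGen.symm _ _ (inn_orb hq hk i))⟩
      · intro i hi
        have hi : orbitRel op a i := by simpa using hi
        rw [T_of]
        simp only
        rw [inn_comm2 hq hab (hg i hi) hk, hga i hi]
  rw [e] at hN
  have h1 := AddSubgroup.nsmul_mem _ hN (Nat.card {x | orbitRel op a x})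
  have h2 : ∑ b ∈ Finset.univ.filter (orbitRel op a),
      Nat.card {x | orbitRel op a x} • (T (g b) z - z) ∈
      (orbC3 {x | orbitRel op a x}).map (d3 op) := by
    refine sum_mem fun b hb => T_inn hq hab a (hg b (by simpa using hb)) z hz
  have hcard : (Finset.univ.filter (orbitRel op a)).card = Nat.card {x | orbitRel op a x} := by
    rw [Nat.card_eq_fintype_card, ← Set.toFinset_card]
    congr 1
    ext; simp
  convert sub_mem h1 h2 using 1
  rw [← Finset.smul_sum, Finset.sum_sub_distrib, Finset.sum_const, hcard, ← nsmul_sub,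
    sub_sub_cancel, ← mul_nsmul, sq]

end AbQ

/-- For a finite abelian quandle and an orbit `O` (the orbit of `a`)
with `n` elements, every torsion element `z` of `H_{2;O}` satisfies `n² • z = 0`. -/
theorem torsion_of_H2Orb_killed_by_card_sq {X : Type*} [Finite X] (op : X → X → X)
    (hq : IsQuandleOp op) (hab : IsAbelianOp op) (a : X) (n : ℕ)
    (hn : Nat.card {x | orbitRel op a x} = n) :
    ∀ z : H2Orb op {x | orbitRel op a x}, IsOfFinAddOrder z → n ^ 2 • z = 0 := by
  intro z hz
  subst hn
  obtain ⟨m, hm, hmz⟩ := isOfFinAddOrder_iff_nsmul_eq_zero.1 hz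
  induction z using QuotientAddGroup.induction_on with
  | H z =>
    rw [← QuotientAddGroup.mk_nsmul, QuotientAddGroup.eq_zero_iff,
      AddSubgroup.mem_addSubgroupOf] at hmz ⊢
    exact AbQ.main hq hab a hm z.2 (by simpa using hmz)
end

section
/- Let r ≥ 3 and let n_1,…,n_r ≥ 1 be integers, and let U_{n_1,…,n_r} be the associated quandle. Then: (i) the commutator subgroup of the structure group of U_{n_1,…,n_r} is isomorphic to ℤ/gcd(n_1,…,n_r,2); (ii) if r = 3, then H_2(U_{n_1,n_2,n_3}) ≅ ℤ⁹ × (ℤ/gcd(n_1,n_2,n_3,2))³; (iii) if r ≥ 4, then H_2(U_{n_1,…,n_r}) ≅ ℤ^{r²}, i.e. the second rack homology group has no torsion. -/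
variable {X : Type*}

namespace UQ

section grp
variable {r : ℕ} (n : Fin r → ℕ)

theorem Uop_same (i : Fin r) (x y : ZMod (n i)) : Uop n ⟨i, x⟩ ⟨i, y⟩ = ⟨i, x⟩ := by
  simp [Uop]

theorem Uop_diff {i j : Fin r} (h : i ≠ j) (x : ZMod (n i)) (y : ZMod (n j)) :
    Uop n ⟨i, x⟩ ⟨j, y⟩ = ⟨i, x + 1⟩ := by
  simp [Uop, h]

/-- generator of the structure group -/
def g (i : Fin r) (x : ZMod (n i)) : StructureGroup (Uop n) := PresentedGroup.of ⟨i, x⟩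

theorem rel (a b : Σ i, ZMod (n i)) :
    (PresentedGroup.of a * PresentedGroup.of b : StructureGroup (Uop n)) =
      PresentedGroup.of b * PresentedGroup.of (Uop n a b) := by
  have h : (PresentedGroup.mk (structureRels (Uop n)) (FreeGroup.of a * FreeGroup.of b * (FreeGroup.of b * FreeGroup.of (Uop n a b))⁻¹)) = 1 :=
    PresentedGroup.one_of_mem ⟨a, b, rfl⟩
  rw [map_mul, map_inv, mul_inv_eq_one] at h
  exact h

theorem rel0 (i : Fin r) (x y : ZMod (n i)) : g n i x * g n i y = g n i y * g n i x := by
  have := rel n ⟨i, x⟩ ⟨i, y⟩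
  rw [Uop_same] at this
  exact this

theorem rel1 {i j : Fin r} (h : i ≠ j) (x : ZMod (n i)) (y : ZMod (n j)) :
    g n i x * g n j y = g n j y * g n i (x + 1) := by
  have := rel n ⟨i, x⟩ ⟨j, y⟩
  rw [Uop_diff n h] at this
  exact this

/-- the central element -/
def cc (i : Fin r) (x : ZMod (n i)) : StructureGroup (Uop n) := (g n i x)⁻¹ * g n i (x + 1)

theorem cc_inv {i j : Fin r} (h : i ≠ j) (x : ZMod (n i)) (y : ZMod (n j)) :
    cc n i x = (cc n j y)⁻¹ := by
  have h1 : g n i (x + 1) = (g n j y)⁻¹ * g n i x * g n j y := by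
    rw [mul_assoc, rel1 n h]; group
  have h2 : g n j (y + 1) = (g n i x)⁻¹ * g n j y * g n i x := by
    rw [mul_assoc, rel1 n h.symm]; group
  unfold cc
  rw [h1, h2]; group

theorem exists_third (hr : 3 ≤ r) (i j : Fin r) : ∃ k, k ≠ i ∧ k ≠ j := by
  have : ∃ k ∈ (Finset.univ : Finset (Fin r)), k ∉ ({i, j} : Finset (Fin r)) := by
    apply Finset.exists_mem_notMem_of_card_lt_card
    have := Finset.card_le_two (a := i) (b := j)
    simp only [Finset.card_univ, Fintype.card_fin]; omega
  obtain ⟨k, -, hk⟩ := this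
  simp at hk
  exact ⟨k, hk.1, hk.2⟩

theorem cc_eq (hr : 3 ≤ r) (i j : Fin r) (x : ZMod (n i)) (y : ZMod (n j)) :
    cc n i x = cc n j y := by
  obtain ⟨k, hi, hj⟩ := exists_third hr i j
  rw [cc_inv n hi.symm x 0, cc_inv n hj.symm y 0]

theorem cc_sq (hr : 3 ≤ r) (i : Fin r) (x : ZMod (n i)) : cc n i x ^ 2 = 1 := by
  obtain ⟨k, hi, hj⟩ := exists_third hr i i
  have := cc_inv n hi.symm x 0
  rw [cc_eq n hr k i 0 x] at this
  rw [pow_two]; nth_rw 1 [this]; simp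

theorem g_succ (i : Fin r) (x : ZMod (n i)) : g n i (x + 1) = g n i x * cc n i x := by
  unfold cc; group

theorem g_nat (hr : 3 ≤ r) (i : Fin r) (k : ℕ) :
    g n i (k : ZMod (n i)) = g n i 0 * cc n i 0 ^ k := by
  induction k with
  | zero => simp
  | succ k ih =>
    push_cast
    rw [g_succ, ih, cc_eq n hr i i (k : ZMod (n i)) 0, pow_succ, mul_assoc]

theorem cc_pow (hr : 3 ≤ r) (i : Fin r) : cc n i 0 ^ n i = 1 := by
  have := g_nat n hr i (n i)
  simpa using this

theorem closure_g : Subgroup.closure (Set.range fun a : (Σ i, ZMod (n i)) => g n a.1 a.2) = ⊤ :=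
  PresentedGroup.closure_range_of _

theorem cc_comm (hr : 3 ≤ r) (i : Fin r) (x : ZMod (n i)) (b : StructureGroup (Uop n)) :
    b * cc n i x = cc n i x * b := by
  have : (⊤ : Subgroup _) ≤ Subgroup.centralizer {cc n i x} := by
    rw [← closure_g, Subgroup.closure_le]
    rintro _ ⟨⟨j, y⟩, rfl⟩
    simp only [SetLike.mem_coe, Subgroup.mem_centralizer_singleton_iff]
    obtain ⟨k, hi, hj⟩ := exists_third hr j j
    rw [cc_eq n hr i k x 0]
    have e : cc n k 1 = cc n k 0 := cc_eq n hr _ _ _ _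
    unfold cc at e ⊢
    have h1 := rel1 n hi 0 y
    have h2 := rel1 n hi (0 + 1) y
    rw [zero_add] at *
    have h3 : g n k 1 = (g n j y)⁻¹ * g n k 0 * g n j y := by
      rw [mul_assoc, h1]; group
    have h4 : g n k (1+1) = (g n j y)⁻¹ * g n k 1 * g n j y := by
      rw [mul_assoc, h2]; group
    nth_rw 1 [← e]
    rw [h4]; nth_rw 1 [h3]; group
  exact (Subgroup.mem_centralizer_singleton_iff.1 (this (Subgroup.mem_top b)))

open scoped commutatorElement in
theorem comm_eq (hr : 3 ≤ r) (i : Fin r) :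
    commutator (StructureGroup (Uop n)) = Subgroup.zpowers (cc n i 0) := by
  apply le_antisymm
  · have hc : Subgroup.zpowers (cc n i 0) ≤ Subgroup.center _ := by
      rw [Subgroup.zpowers_le, Subgroup.mem_center_iff]
      exact cc_comm n hr i 0
    have : (Subgroup.zpowers (cc n i 0)).Normal := ⟨fun a ha b => by
      rw [Subgroup.mem_center_iff.1 (hc ha) b]; simpa using ha⟩
    set π := QuotientGroup.mk' (Subgroup.zpowers (cc n i 0)) with hπ
    have hgen : ∀ a b : (Σ i, ZMod (n i)), π (g n a.1 a.2) * π (g n b.1 b.2) = π (g n b.1 b.2) * π (g n a.1 a.2) := by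
      rintro ⟨j, x⟩ ⟨k, y⟩
      by_cases h : j = k
      · subst h; rw [← map_mul, rel0, map_mul]
      · have : π (cc n i 0) = 1 := (QuotientGroup.eq_one_iff _).2 (Subgroup.mem_zpowers _)
        rw [← map_mul, rel1 n h, map_mul, g_succ, map_mul, cc_eq n hr j i x 0, this, mul_one]
    have h1 : ∀ a : (Σ i, ZMod (n i)), ∀ b, π (g n a.1 a.2) * π b = π b * π (g n a.1 a.2) := by
      intro a b
      have : (⊤ : Subgroup _) ≤ (Subgroup.centralizer {π (g n a.1 a.2)}).comap π := by
        rw [← closure_g, Subgroup.closure_le]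
        rintro _ ⟨b, rfl⟩
        simp only [SetLike.mem_coe, Subgroup.mem_comap, Subgroup.mem_centralizer_singleton_iff]
        exact hgen b a
      exact (Subgroup.mem_centralizer_singleton_iff.1 (this (Subgroup.mem_top b))).symm
    have h2 : ∀ a b, π a * π b = π b * π a := by
      intro a b
      have : (⊤ : Subgroup _) ≤ (Subgroup.centralizer {π b}).comap π := by
        rw [← closure_g, Subgroup.closure_le]
        rintro _ ⟨a, rfl⟩
        simp only [SetLike.mem_coe, Subgroup.mem_comap, Subgroup.mem_centralizer_singleton_iff]
        exact h1 a b
      exact (Subgroup.mem_centralizer_singleton_iff.1 (this (Subgroup.mem_top a)))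
    rw [commutator_def, Subgroup.commutator_le]
    intro a _ b _
    rw [← QuotientGroup.eq_one_iff]
    change π _ = 1
    rw [map_commutatorElement, commutatorElement_eq_one_iff_mul_comm]
    exact h2 a b
  · rw [Subgroup.zpowers_le, commutator_def]
    obtain ⟨k, hi, -⟩ := exists_third hr i i
    have : cc n i 0 = (⁅(g n i 0)⁻¹, (g n k 0)⁻¹⁆ : StructureGroup (Uop n)) := by
      have h1 : g n i (0 + 1) = (g n k 0)⁻¹ * g n i 0 * g n k 0 := by
        rw [mul_assoc, rel1 n hi.symm]; group
      rw [cc, h1, commutatorElement_def]; group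
    rw [this]
    exact Subgroup.commutator_mem_commutator (Subgroup.mem_top _) (Subgroup.mem_top _)

/-- partial sum -/
def ps (i : Fin r) (v : Fin r → ZMod 2) : ZMod 2 := ∑ k, if k < i then v k else 0

theorem ps_add (i : Fin r) (v w : Fin r → ZMod 2) : ps i (v + w) = ps i v + ps i w := by
  unfold ps
  rw [← Finset.sum_add_distrib]
  refine Finset.sum_congr rfl fun k _ => ?_
  split_ifs <;> simp

theorem ps_single (i j : Fin r) : ps i (Pi.single j 1) = if j < i then 1 else 0 := by
  unfold ps
  rw [Finset.sum_eq_single j]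
  · simp
  · intro b _ hb; simp [Pi.single_eq_of_ne hb]
  · simp

/-- model permutation -/
def T (i : Fin r) (x : ZMod 2) : Equiv.Perm ((Fin r → ZMod 2) × ZMod 2) where
  toFun p := (p.1 + Pi.single i 1, p.2 + x + ps i p.1)
  invFun p := (p.1 - Pi.single i 1, p.2 - x - ps i p.1)
  left_inv p := by
    ext1
    · simp
    · simp only [ps_add, ps_single]; simp; ring
  right_inv p := by
    have : ps i p.1 = ps i (p.1 - Pi.single i 1) := by
      conv_lhs => rw [← sub_add_cancel p.1 (Pi.single i 1), ps_add, ps_single]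
      simp
    ext1
    · simp
    · simp only [← this]; ring

theorem T_rel0 (i : Fin r) (x y : ZMod 2) : T i x * T i y = T i y * T i x := by
  ext1 p
  simp only [T, Equiv.Perm.mul_apply, Equiv.coe_fn_mk, ps_add, ps_single]
  ext1
  · simp
  · simp; ring

theorem T_rel1 {i j : Fin r} (h : i ≠ j) (x y : ZMod 2) : T i x * T j y = T j y * T i (x + 1) := by
  ext1 p
  simp only [T, Equiv.Perm.mul_apply, Equiv.coe_fn_mk, ps_add, ps_single]
  ext1
  · simp only; ring
  · rcases lt_or_gt_of_ne h with h' | h'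
    · have h2 : (1 + 1 : ZMod 2) = 0 := by decide
      simp only [h', h'.not_gt, if_true, if_false]
      linear_combination -h2
    · simp only [h', h'.not_gt, if_true, if_false]; ring

theorem cc_ne (h2 : ∀ i, 2 ∣ n i) (i : Fin r) : cc n i 0 ≠ 1 := by
  let φ : StructureGroup (Uop n) →* Equiv.Perm ((Fin r → ZMod 2) × ZMod 2) :=
    PresentedGroup.toGroup (f := fun a => T a.1 (ZMod.castHom (h2 a.1) (ZMod 2) a.2)) (by
      rintro _ ⟨⟨i, x⟩, ⟨j, y⟩, rfl⟩
      simp only [map_mul, map_inv, FreeGroup.lift_apply_of, mul_inv_eq_one]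
      by_cases h : i = j
      · subst h; rw [Uop_same]; exact T_rel0 _ _ _
      · rw [Uop_diff n h]; simp only [map_add, map_one]; exact T_rel1 h _ _)
  have hφ : ∀ j x, φ (g n j x) = T j (ZMod.castHom (h2 j) (ZMod 2) x) := fun j x =>
    PresentedGroup.toGroup.of _
  intro h
  have := congrArg φ h
  rw [cc, map_mul, map_inv, hφ, hφ, map_one, inv_mul_eq_one] at this
  have := congrArg (fun e : Equiv.Perm ((Fin r → ZMod 2) × ZMod 2) => (e 0).2) this
  simp only [T, map_add, map_zero, map_one] at this
  simp at this

theorem part1 (hr : 3 ≤ r) :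
    Nonempty (Additive ↥(commutator (StructureGroup (Uop n))) ≃+
        ZMod (Nat.gcd (Finset.univ.gcd n) 2)) := by
  have i : Fin r := ⟨0, by omega⟩
  have hord : orderOf (cc n i 0) = Nat.gcd (Finset.univ.gcd n) 2 := by
    apply Nat.dvd_antisymm
    · refine Nat.dvd_gcd (Finset.dvd_gcd fun j _ => ?_) ?_
      · rw [orderOf_dvd_iff_pow_eq_one, cc_eq n hr i j 0 0]
        exact cc_pow n hr j
      · exact orderOf_dvd_iff_pow_eq_one.2 (cc_sq n hr i 0)
    · rcases (Nat.dvd_prime Nat.prime_two).1 (Nat.gcd_dvd_right (Finset.univ.gcd n) 2) with h | h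
      · rw [h]; exact one_dvd _
      · rw [h]
        have h2 : ∀ j, 2 ∣ n j := fun j => by
          have := Nat.gcd_dvd_left (Finset.univ.gcd n) 2
          rw [h] at this
          exact this.trans (Finset.gcd_dvd (Finset.mem_univ j))
        rw [orderOf_eq_prime (cc_sq n hr i 0) (cc_ne n h2 i)]
  have hcard : Nat.card (Subgroup.zpowers (cc n i 0)) = Nat.gcd (Finset.univ.gcd n) 2 := by
    rw [Nat.card_zpowers, hord]
  rw [comm_eq n hr i, ← hcard]
  exact ⟨(zmodCyclicMulEquiv inferInstance).symm.toAdditiveLeft⟩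

end grp

section hom
variable {r : ℕ} (n : Fin r → ℕ)

/-- cokernel of `d3` -/
abbrev QQ : Type := FreeAbelianGroup ((Σ i, ZMod (n i)) × (Σ i, ZMod (n i))) ⧸ (d3 (Uop n)).range

/-- class of a generator -/
def q (i : Fin r) (x : ZMod (n i)) (j : Fin r) (y : ZMod (n j)) : QQ n :=
  QuotientAddGroup.mk (FreeAbelianGroup.of (⟨i, x⟩, ⟨j, y⟩))

theorem qrel (a b c : Σ i, ZMod (n i)) :
    q n (Uop n a b).1 (Uop n a b).2 c.1 c.2 - q n a.1 a.2 c.1 c.2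
      - q n (Uop n a c).1 (Uop n a c).2 (Uop n b c).1 (Uop n b c).2 + q n a.1 a.2 b.1 b.2 = 0 := by
  have h : (QuotientAddGroup.mk (d3 (Uop n) (FreeAbelianGroup.of (a, b, c))) : QQ n) = 0 :=
    (QuotientAddGroup.eq_zero_iff _).2 ⟨_, rfl⟩
  rw [d3, FreeAbelianGroup.lift_apply_of] at h
  exact h

theorem r1 {i j : Fin r} (h : i ≠ j) (x : ZMod (n i)) (y z : ZMod (n j)) :
    q n i (x + 1) j z - q n i x j z = q n i (x + 1) j y - q n i x j y := by
  have := qrel n ⟨i, x⟩ ⟨j, y⟩ ⟨j, z⟩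
  rw [Uop_diff n h, Uop_diff n h, Uop_same] at this
  simp only at this
  rw [← sub_eq_zero, ← this]; abel

theorem r2 {i k : Fin r} (h : i ≠ k) (x y : ZMod (n i)) :
    q n i (x + 1) i (y + 1) = q n i x i y := by
  have := qrel n ⟨i, x⟩ ⟨i, y⟩ ⟨k, 0⟩
  rw [Uop_diff n h, Uop_diff n h, Uop_same] at this
  simp only at this
  rw [eq_comm, ← sub_eq_zero, ← this]; abel

theorem r3 {i j : Fin r} (h : i ≠ j) (x z : ZMod (n i)) (y : ZMod (n j)) :
    q n i (x + 1) i z - q n i x i z = q n i x j (y + 1) - q n i x j y := by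
  have := qrel n ⟨i, x⟩ ⟨j, y⟩ ⟨i, z⟩
  rw [Uop_diff n h, Uop_diff n h.symm, Uop_same] at this
  simp only at this
  rw [← sub_eq_zero, ← this]; abel

theorem r4 {i j k : Fin r} (hij : i ≠ j) (hik : i ≠ k) (hjk : j ≠ k) (x : ZMod (n i))
    (y : ZMod (n j)) (z : ZMod (n k)) :
    q n i (x + 1) k z - q n i x k z = q n i (x + 1) j (y + 1) - q n i x j y := by
  have := qrel n ⟨i, x⟩ ⟨j, y⟩ ⟨k, z⟩
  rw [Uop_diff n hij, Uop_diff n hik, Uop_diff n hjk] at this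
  simp only at this
  rw [← sub_eq_zero, ← this]; abel

theorem step_nat {A : Type*} [AddCommGroup A] {N : ℕ} (f : ZMod N → A) (h : A)
    (hf : ∀ x, f (x + 1) = f x + h) (k : ℕ) : f (k : ZMod N) = f 0 + k • h := by
  induction k with
  | zero => simp
  | succ k ih => push_cast; rw [hf, ih, succ_nsmul, add_assoc]

theorem step_ord {A : Type*} [AddCommGroup A] {N : ℕ} (f : ZMod N → A) (h : A)
    (hf : ∀ x, f (x + 1) = f x + h) : N • h = 0 := by
  have := step_nat f h hf N
  simpa using this

theorem step {A : Type*} [AddCommGroup A] {N m : ℕ} [NeZero N] (f : ZMod N → A) (h : A)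
    (hf : ∀ x, f (x + 1) = f x + h) (hm : m ∣ N) (Γ : ZMod m →+ A) (hΓ : Γ 1 = h) (x : ZMod N) :
    f x = f 0 + Γ (ZMod.castHom hm (ZMod m) x) := by
  obtain ⟨k, rfl⟩ := ZMod.natCast_zmod_surjective x
  rw [step_nat f h hf k, map_natCast, ← hΓ, ← map_nsmul, nsmul_eq_mul, mul_one]

theorem step_const {A : Type*} [AddCommGroup A] {N : ℕ} [NeZero N] (f : ZMod N → A)
    (hf : ∀ x, f (x + 1) = f x) (x : ZMod N) :
    f x = f 0 := by
  obtain ⟨k, rfl⟩ := ZMod.natCast_zmod_surjective x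
  rw [step_nat f 0 (by simpa using hf) k]; simp

variable (p : Fin r → Fin r)

/-- torsion class -/
def ga (i : Fin r) : QQ n := q n i 0 (p i) 1 - q n i 0 (p i) 0

variable [∀ i, NeZero (n i)] {p}

theorem s2 (hp : ∀ i, i ≠ p i) (i : Fin r) (x z : ZMod (n i)) : q n i (x + 1) i z - q n i x i z = ga n p i := by
  have hD : ∀ x, q n i (x + 1) i 0 - q n i x i 0 = ga n p i := by
    intro x
    rw [step_const (fun x => q n i (x + 1) i 0 - q n i x i 0) _ x]
    · rw [r3 n (hp i) 0 0 0, ga, zero_add]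
    · intro x
      have e1 := r2 n (hp i) (x + 1) 0
      have e2 := r2 n (hp i) x 0
      rw [r3 n (hp i) (x + 1) 0 0, ← r3 n (hp i) (x + 1) (0 + 1) 0, e1, e2]
  rw [← hD x, r3 n (hp i) x z 0, r3 n (hp i) x 0 0]

theorem s1 (hp : ∀ i, i ≠ p i) {i j : Fin r} (h : i ≠ j) (x : ZMod (n i)) (y : ZMod (n j)) :
    q n i x j (y + 1) - q n i x j y = ga n p i := by
  rw [← r3 n h x 0 y, s2 n hp]

theorem s3 (hp : ∀ i, i ≠ p i) (i : Fin r) (x z : ZMod (n i)) : q n i x i (z + 1) - q n i x i z = - ga n p i := by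
  rw [← s2 n hp i x (z + 1), ← r2 n (hp i) x z]; abel

theorem s4 (hp : ∀ i, i ≠ p i) {i j k : Fin r} (hij : i ≠ j) (hik : i ≠ k) (hjk : j ≠ k) (x : ZMod (n i))
    (y : ZMod (n j)) (z : ZMod (n k)) :
    q n i (x + 1) k z - q n i x k z = q n i (x + 1) j y - q n i x j y + ga n p i := by
  rw [r4 n hij hik hjk x y z, ← s1 n hp hij (x + 1) y]; abel

theorem ga_two (hp : ∀ i, i ≠ p i) (hr : 3 ≤ r) (i : Fin r) : 2 • ga n p i = 0 := by
  obtain ⟨k, h1, h2⟩ := exists_third hr i (p i)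
  have e1 := s4 n hp (hp i) h1.symm h2.symm 0 0 0
  have e2 := s4 n hp h1.symm (hp i) h2 0 0 0
  rw [e1, add_assoc] at e2
  rw [two_nsmul]
  exact left_eq_add.1 e2

theorem ga_n (hp : ∀ i, i ≠ p i) (i j : Fin r) : n j • ga n p i = 0 := by
  by_cases h : i = j
  · subst h
    exact step_ord (fun x => q n i x i 0) _ fun x => by rw [← s2 n hp i x 0]; abel
  · exact step_ord (fun y => q n i 0 j y) _ fun y => by rw [← s1 n hp h 0 y]; abel

theorem ga_four (hp : ∀ i, i ≠ p i) (hr : 4 ≤ r) (i : Fin r) : ga n p i = 0 := by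
  obtain ⟨k, h1, h2⟩ := exists_third (by omega : 3 ≤ r) i (p i)
  have : ∃ l ∈ (Finset.univ : Finset (Fin r)), l ∉ ({i, p i, k} : Finset (Fin r)) := by
    apply Finset.exists_mem_notMem_of_card_lt_card
    have := Finset.card_le_three (a := i) (b := p i) (c := k)
    simp only [Finset.card_univ, Fintype.card_fin]; omega
  obtain ⟨l, -, hl⟩ := this
  simp only [Finset.mem_insert, Finset.mem_singleton, not_or] at hl
  obtain ⟨l1, l2, l3⟩ := hl
  have e1 := s4 n hp (hp i) h1.symm h2.symm 0 0 0
  have e2 := s4 n hp h1.symm (Ne.symm l1) (Ne.symm l3) 0 0 0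
  have e3 := s4 n hp (hp i) (Ne.symm l1) (Ne.symm l2) 0 0 0
  rw [e2, e1] at e3
  exact add_eq_left.1 e3

end hom

section main
set_option linter.unusedSectionVars false
variable {r : ℕ} (n : Fin r → ℕ) (p : Fin r → Fin r) {m : ℕ} (hm : ∀ i, m ∣ n i)

/-- the integral coordinates on generators -/
def f1 (a b : Σ i, ZMod (n i)) (ij : Fin r × Fin r) : ℤ :=
  if a.1 = ij.1 then
    if ij.2 = p ij.1 then (if a.2 = 0 ∧ b.1 ≠ ij.1 then 1 else 0)
    else (if b.1 = ij.2 then 1 else 0)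
  else 0

/-- the torsion coordinate on generators -/
def gg (i : Fin r) (x : ZMod (n i)) (j : Fin r) (y : ZMod (n j)) : ZMod m :=
  if j = i then ZMod.castHom (hm i) (ZMod m) x - ZMod.castHom (hm j) (ZMod m) y
  else if j = p i then ZMod.castHom (hm j) (ZMod m) y
  else ZMod.castHom (hm i) (ZMod m) x + ZMod.castHom (hm j) (ZMod m) y

/-- the torsion coordinates on generators -/
def f2 (a b : Σ i, ZMod (n i)) (i : Fin r) : ZMod m :=
  if a.1 = i then gg n p hm a.1 a.2 b.1 b.2 else 0

/-- the coordinate map -/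
def F : FreeAbelianGroup ((Σ i, ZMod (n i)) × (Σ i, ZMod (n i))) →+
    (Fin r × Fin r → ℤ) × (Fin r → ZMod m) :=
  FreeAbelianGroup.lift fun t => (f1 n p t.1 t.2, f2 n p hm t.1 t.2)

theorem f1_d3 (a b c : Σ i, ZMod (n i)) (ij : Fin r × Fin r) :
    f1 n p (Uop n a b) c ij - f1 n p a c ij - f1 n p (Uop n a c) (Uop n b c) ij
      + f1 n p a b ij = 0 := by
  obtain ⟨i, x⟩ := a
  obtain ⟨j, y⟩ := b
  obtain ⟨k, z⟩ := c
  have hbc : (Uop n ⟨j, y⟩ ⟨k, z⟩).1 = j := by unfold Uop; split_ifs <;> rfl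
  by_cases hij : i = j
  · subst hij
    rw [Uop_same]
    by_cases hik : i = k
    · subst hik
      rw [Uop_same, Uop_same]; simp [f1]
    · rw [Uop_diff n hik, Uop_diff n hik]
      simp only [f1]
      split_ifs <;> simp_all
  · rw [Uop_diff n hij]
    by_cases hik : i = k
    · subst hik
      rw [Uop_same]
      simp only [f1, hbc]
      split_ifs <;> simp_all
    · rw [Uop_diff n hik]
      simp only [f1, hbc]
      have hij' := Ne.symm hij
      have hik' := Ne.symm hik
      split_ifs <;> simp_all

theorem gg_d3 (hp : ∀ i, i ≠ p i) (h2 : m ∣ 2) (h3 : r = 3 ∨ m = 1) (a b c : Σ i, ZMod (n i)) :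
    gg n p hm (Uop n a b).1 (Uop n a b).2 c.1 c.2 - gg n p hm a.1 a.2 c.1 c.2
      - gg n p hm (Uop n a c).1 (Uop n a c).2 (Uop n b c).1 (Uop n b c).2
      + gg n p hm a.1 a.2 b.1 b.2 = 0 := by
  obtain ⟨i, x⟩ := a
  obtain ⟨j, y⟩ := b
  obtain ⟨k, z⟩ := c
  have h2' : (1 + 1 : ZMod m) = 0 := by
    have := (ZMod.natCast_eq_zero_iff 2 m).2 h2
    rw [← this]; norm_num
  have hpi := hp i
  by_cases hij : i = j
  · subst hij
    rw [Uop_same]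
    by_cases hik : i = k
    · subst hik
      rw [Uop_same, Uop_same]; simp [gg]
    · rw [Uop_diff n hik, Uop_diff n hik]
      simp only [gg, if_true, map_add, map_one]
      ring
  · rw [Uop_diff n hij]
    by_cases hik : i = k
    · subst hik
      rw [Uop_same, Uop_diff n (Ne.symm hij)]
      simp only [gg, if_true, Ne.symm hij, if_false, map_add, map_one]
      split_ifs <;> ring
    · rw [Uop_diff n hik]
      by_cases hjk : j = k
      · subst hjk
        rw [Uop_same]
        simp only [gg, Ne.symm hij, if_false, map_add, map_one]
        split_ifs <;> ring
      · rw [Uop_diff n hjk]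
        simp only [gg, Ne.symm hij, Ne.symm hik, if_false, map_add, map_one]
        by_cases hkp : k = p i
        · have hjp : j ≠ p i := fun h => hjk (h.trans hkp.symm)
          simp only [hkp, hjp, if_true, if_false]
          linear_combination -h2'
        · by_cases hjp : j = p i
          · simp only [hkp, hjp, if_true, if_false]; ring
          · rcases h3 with h3 | h3
            · exfalso
              subst h3
              generalize p i = l at *
              clear h2' hm x y z h2
              revert i j k l
              decide
            · subst h3
              exact Subsingleton.elim _ _

theorem F_d3 (hp : ∀ i, i ≠ p i) (h2 : m ∣ 2) (h3 : r = 3 ∨ m = 1) :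
    (F n p hm).comp (d3 (Uop n)) = 0 := by
  ext1 ⟨a, b, c⟩
  simp only [AddMonoidHom.comp_apply, d3, FreeAbelianGroup.lift_apply_of, map_add, map_sub, F,
    AddMonoidHom.zero_apply]
  ext ij
  · exact f1_d3 n p a b c ij
  · have hu : ∀ b, (Uop n a b).1 = a.1 := by intro b; unfold Uop; split_ifs <;> rfl
    simp only [Prod.snd_add, Prod.snd_sub, Pi.add_apply, Pi.sub_apply, f2, Prod.snd_zero,
      Pi.zero_apply, hu]
    split_ifs
    · exact gg_d3 n p hm hp h2 h3 a b c
    · simp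

/-- coefficients along the orbit direction -/
def S (a' : Σ i, ZMod (n i)) : FreeAbelianGroup ((Σ i, ZMod (n i)) × (Σ i, ZMod (n i))) →+ ℤ :=
  FreeAbelianGroup.lift fun t => if t.1 = a' ∧ t.1.1 ≠ t.2.1 then 1 else 0

/-- coefficient functional -/
def co (a' : Σ i, ZMod (n i)) : FreeAbelianGroup (Σ i, ZMod (n i)) →+ ℤ :=
  FreeAbelianGroup.lift fun t => if t = a' then 1 else 0

theorem co_d2 (i : Fin r) (x : ZMod (n i)) :
    (co n ⟨i, x + 1⟩).comp (d2 (Uop n)) = S n ⟨i, x⟩ - S n ⟨i, x + 1⟩ := by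
  ext1 ⟨⟨j, y⟩, ⟨k, z⟩⟩
  simp only [AddMonoidHom.comp_apply, d2, FreeAbelianGroup.lift_apply_of, map_sub, co, S,
    AddMonoidHom.sub_apply]
  by_cases hjk : j = k
  · subst hjk
    rw [Uop_same]; simp
  · rw [Uop_diff n hjk]
    have : (⟨j, y + 1⟩ : Σ i, ZMod (n i)) = ⟨i, x + 1⟩ ↔ (⟨j, y⟩ : Σ i, ZMod (n i)) = ⟨i, x⟩ := by
      by_cases h : j = i
      · subst h; simp
      · simp [h]
    simp only [this, ne_eq, hjk, not_false_eq_true, and_true]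

variable [∀ i, NeZero (n i)]

theorem S_const {u} (hu : d2 (Uop n) u = 0) (i : Fin r) (x : ZMod (n i)) :
    S n ⟨i, x⟩ u = S n ⟨i, 0⟩ u := by
  refine step_const (fun x => S n ⟨i, x⟩ u) (fun x => ?_) x
  have := DFunLike.congr_fun (co_d2 n i x) u
  rw [AddMonoidHom.comp_apply, hu, map_zero, AddMonoidHom.sub_apply] at this
  linarith

theorem F_S (i : Fin r) (u) : (F n p hm u).1 (i, p i) = S n ⟨i, 0⟩ u := by
  have : ((Pi.evalAddMonoidHom (fun _ : Fin r × Fin r => ℤ) (i, p i)).comp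
      ((AddMonoidHom.fst _ _).comp (F n p hm))) = S n ⟨i, 0⟩ := by
    ext1 ⟨⟨j, y⟩, ⟨k, z⟩⟩
    simp only [AddMonoidHom.comp_apply, F, S, FreeAbelianGroup.lift_apply_of,
      AddMonoidHom.coe_fst, Pi.evalAddMonoidHom_apply, f1]
    by_cases h : j = i
    · subst h; simp [eq_comm]
    · simp [h]
  exact DFunLike.congr_fun this u

/-- the section on the torsion part -/
def Gam (hγ : ∀ i, m • ga n p i = 0) (i : Fin r) : ZMod m →+ QQ n :=
  ZMod.lift m ⟨zmultiplesHom (QQ n) (ga n p i), by simpa using hγ i⟩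

theorem Gam_one (hγ : ∀ i, m • ga n p i = 0) (i : Fin r) : Gam n p hγ i 1 = ga n p i := by
  have := ZMod.lift_coe m ⟨zmultiplesHom (QQ n) (ga n p i), by simpa using hγ i⟩ 1
  simpa [Gam] using this

/-- basis element -/
def EE (i j : Fin r) : QQ n := q n i 0 j 0 - if j = i then 0 else q n i 0 (p i) 0

theorem q_form (hp : ∀ i, i ≠ p i) (hγ : ∀ i, m • ga n p i = 0)
    (i : Fin r) (x : ZMod (n i)) (j : Fin r) (y : ZMod (n j)) :
    q n i x j y = EE n p i j + (if i ≠ j then q n i x (p i) 0 else 0) +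
      Gam n p hγ i (gg n p hm i x j y) := by
  by_cases h : i = j
  · subst h
    have e1 := step (fun y => q n i x i y) (- ga n p i)
      (fun y => by rw [← s3 n hp i x y]; abel) (hm i) (-(Gam n p hγ i))
      (by rw [AddMonoidHom.neg_apply, Gam_one]) y
    have e2 := step (fun x => q n i x i 0) (ga n p i)
      (fun x => by rw [← s2 n hp i x 0]; abel) (hm i) (Gam n p hγ i) (Gam_one n p hγ i) x
    rw [e1, e2]
    simp only [EE, gg, if_true, ne_eq, not_true_eq_false, if_false, AddMonoidHom.neg_apply, map_sub]
    abel
  · have e1 := step (fun y => q n i x j y) (ga n p i)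
      (fun y => by rw [← s1 n hp h x y]; abel) (hm j) (Gam n p hγ i) (Gam_one n p hγ i) y
    rw [e1]
    by_cases h' : j = p i
    · subst h'
      simp [EE, gg, Ne.symm h, h]
    · have e2 := step (fun x => q n i x j 0 - q n i x (p i) 0) (ga n p i)
        (fun x => by
          have := s4 n hp (hp i) h (Ne.symm h') x 0 0
          rw [sub_eq_iff_eq_add] at this
          rw [this]; abel) (hm i) (Gam n p hγ i) (Gam_one n p hγ i) x
      rw [sub_eq_iff_eq_add] at e2
      rw [e2]
      simp only [EE, gg, Ne.symm h, h, h', ne_eq, not_false_eq_true, if_true, if_false, map_add]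
      abel

theorem EE_p (hp : ∀ i, i ≠ p i) (i : Fin r) : EE n p i (p i) = 0 := by
  simp [EE, Ne.symm (hp i)]

theorem recon (hp : ∀ i, i ≠ p i) (hγ : ∀ i, m • ga n p i = 0) (u) :
    (QuotientAddGroup.mk u : QQ n) = ∑ ij : Fin r × Fin r, (F n p hm u).1 ij • EE n p ij.1 ij.2
      + ∑ a : (Σ i, ZMod (n i)), S n a u • q n a.1 a.2 (p a.1) 0
      + ∑ i, Gam n p hγ i ((F n p hm u).2 i) := by
  induction u using FreeAbelianGroup.induction_on with
  | zero => simp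
  | of t =>
    obtain ⟨⟨i, x⟩, ⟨j, y⟩⟩ := t
    change q n i x j y = _
    rw [q_form n p hm hp hγ]
    congr 1
    · congr 1
      · rw [Finset.sum_eq_single (i, j)]
        · by_cases h : j = p i
          · subst h; rw [EE_p n p hp]; simp
          · simp [F, f1, h]
        · rintro ⟨k, l⟩ - hkl
          by_cases h : l = p k
          · subst h; rw [EE_p n p hp]; simp
          · simp only [F, f1, FreeAbelianGroup.lift_apply_of, h, if_false]
            split_ifs with h1 h2
            · exact absurd (Prod.ext h1.symm h2.symm) hkl
            · simp
            · simp
        · simp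
      · rw [Finset.sum_eq_single ⟨i, x⟩]
        · simp only [S, FreeAbelianGroup.lift_apply_of, true_and]
          split_ifs <;> simp
        · intro b _ hb
          simp [S, Ne.symm hb]
        · simp
    · rw [Finset.sum_eq_single i]
      · simp [F, f2]
      · intro b _ hb
        simp [F, f2, Ne.symm hb]
      · simp
  | neg t ht =>
    rw [QuotientAddGroup.mk_neg, ht]
    simp only [map_neg, Prod.fst_neg, Prod.snd_neg, Pi.neg_apply, neg_smul, Finset.sum_neg_distrib]
    abel
  | add u v hu hv =>
    rw [QuotientAddGroup.mk_add, hu, hv]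
    simp only [map_add, Prod.fst_add, Prod.snd_add, Pi.add_apply, add_smul, Finset.sum_add_distrib]
    abel

theorem F_inj (hp : ∀ i, i ≠ p i) (hγ : ∀ i, m • ga n p i = 0) {u}
    (hu : d2 (Uop n) u = 0) (hF : F n p hm u = 0) : u ∈ (d3 (Uop n)).range := by
  rw [← QuotientAddGroup.eq_zero_iff]
  have := recon n p hm hp hγ u
  rw [this]
  have hS : ∀ a, S n a u = 0 := by
    rintro ⟨i, x⟩
    rw [S_const n hu, ← F_S n p hm, hF]; rfl
  simp [hF, hS]

theorem surj1 (hp : ∀ i, i ≠ p i) (ij : Fin r × Fin r) :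
    ∃ u, d2 (Uop n) u = 0 ∧ F n p hm u = (Pi.single ij 1, 0) := by
  obtain ⟨i, j⟩ := ij
  by_cases h : j = p i
  · subst h
    refine ⟨∑ x : ZMod (n i), FreeAbelianGroup.of (⟨i, x⟩, ⟨p i, 0⟩), ?_, ?_⟩
    · rw [map_sum]
      simp only [d2, FreeAbelianGroup.lift_apply_of, Uop_diff n (hp i), Finset.sum_sub_distrib]
      rw [sub_eq_zero]
      exact Fintype.sum_equiv (Equiv.addRight 1) _ _ (fun x => rfl)
    · rw [map_sum]
      simp only [F, FreeAbelianGroup.lift_apply_of]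
      ext kl
      · obtain ⟨k, l⟩ := kl
        simp only [Prod.fst_sum, Finset.sum_apply, f1, Pi.single_apply, Prod.mk.injEq]
        by_cases hk : i = k
        · subst hk
          by_cases hl : l = p i
          · subst hl; simp [Ne.symm (hp i), Finset.card_eq_one]
            exact ⟨0, by ext; simp⟩
          · simp [hl, Ne.symm hl]
        · simp [hk, Ne.symm hk]
      · simp [Prod.snd_sum, f2, gg, Ne.symm (hp i)]
  · by_cases h' : i = j
    · subst h'
      refine ⟨FreeAbelianGroup.of (⟨i, 0⟩, ⟨i, 0⟩), ?_, ?_⟩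
      · simp only [d2, FreeAbelianGroup.lift_apply_of, Uop_same, sub_self]
      · simp only [F, FreeAbelianGroup.lift_apply_of]
        ext kl
        · obtain ⟨k, l⟩ := kl
          simp only [f1, Pi.single_apply, Prod.mk.injEq]
          by_cases hk : i = k
          · subst hk
            by_cases hl : l = p i
            · subst hl; simp [Ne.symm (hp i)]
            · simp [hl, eq_comm]
          · simp [hk, Ne.symm hk]
        · simp [f2, gg]
    · refine ⟨FreeAbelianGroup.of (⟨i, 0⟩, ⟨j, 0⟩) - FreeAbelianGroup.of (⟨i, 0⟩, ⟨p i, 0⟩), ?_, ?_⟩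
      · simp only [d2, map_sub, FreeAbelianGroup.lift_apply_of, Uop_diff n h', Uop_diff n (hp i),
          sub_self]
      · simp only [F, map_sub, FreeAbelianGroup.lift_apply_of]
        ext kl
        · obtain ⟨k, l⟩ := kl
          simp only [Prod.fst_sub, Pi.sub_apply, f1, Pi.single_apply, Prod.mk.injEq]
          by_cases hk : i = k
          · subst hk
            by_cases hl : l = p i
            · subst hl; simp [Ne.symm (hp i), Ne.symm h', Ne.symm h]
            · simp [hl, Ne.symm hl, eq_comm]
          · simp [hk, Ne.symm hk]
        · simp [f2, gg, Ne.symm (hp i), Ne.symm h']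

theorem surj2 (hp : ∀ i, i ≠ p i) (i : Fin r) :
    ∃ u, d2 (Uop n) u = 0 ∧ F n p hm u = (0, Pi.single i 1) := by
  refine ⟨FreeAbelianGroup.of (⟨i, 0⟩, ⟨p i, 1⟩) - FreeAbelianGroup.of (⟨i, 0⟩, ⟨p i, 0⟩), ?_, ?_⟩
  · simp only [d2, map_sub, FreeAbelianGroup.lift_apply_of, Uop_diff n (hp i), sub_self]
  · simp only [F, map_sub, FreeAbelianGroup.lift_apply_of]
    ext k
    · simp [f1]
    · simp only [Prod.snd_sub, Pi.sub_apply, f2, Pi.single_apply, gg, Ne.symm (hp i), if_false,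
        if_true, map_one, map_zero, sub_zero]
      by_cases hk : i = k
      · subst hk; simp
      · simp [hk, Ne.symm hk]

theorem F_surj (hp : ∀ i, i ≠ p i) (t : (Fin r × Fin r → ℤ) × (Fin r → ZMod m)) :
    ∃ u, d2 (Uop n) u = 0 ∧ F n p hm u = t := by
  choose e he1 he2 using surj1 n p hm hp
  choose η hη1 hη2 using surj2 n p hm hp
  choose w hw using fun i => ZMod.intCast_surjective (t.2 i)
  refine ⟨∑ ij, t.1 ij • e ij + ∑ i, w i • η i, ?_, ?_⟩
  · simp [map_sum, map_zsmul, he1, hη1]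
  · simp only [map_add, map_sum, map_zsmul, he2, hη2]
    ext k
    · simp [Prod.fst_sum, Pi.single_apply]
    · simp [Prod.snd_sum, Pi.single_apply, hw]

theorem H2_equiv (hm : ∀ i, m ∣ n i) (hp : ∀ i, i ≠ p i) (h2 : m ∣ 2) (h3 : r = 3 ∨ m = 1)
    (hγ : ∀ i, m • ga n p i = 0) :
    Nonempty (H2 (Uop n) ≃+ (Fin r × Fin r → ℤ) × (Fin r → ZMod m)) := by
  let f := (F n p hm).comp (d2 (Uop n)).ker.subtype
  have hs : Function.Surjective f := by
    intro t
    obtain ⟨u, h, h'⟩ := F_surj n p hm hp t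
    exact ⟨⟨u, h⟩, h'⟩
  have hk : (d3 (Uop n)).range.addSubgroupOf (d2 (Uop n)).ker = f.ker := by
    ext ⟨u, hu⟩
    rw [AddSubgroup.mem_addSubgroupOf, AddMonoidHom.mem_ker]
    constructor
    · rintro ⟨v, hv⟩
      change F n p hm u = 0
      rw [← (show d3 (Uop n) v = u from hv), ← AddMonoidHom.comp_apply, F_d3 n p hm hp h2 h3]
      rfl
    · intro h
      exact F_inj n p hm hp hγ hu h
  exact ⟨(QuotientAddGroup.quotientAddEquivOfEq hk).trans
    (QuotientAddGroup.quotientKerEquivOfSurjective f hs)⟩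

end main

end UQ

/-- For `r ≥ 3` and `n_1,…,n_r ≥ 1`:
(i) the commutator subgroup of the structure group of `U_{n_1,…,n_r}` is
`ℤ/gcd(n_1,…,n_r,2)`;
(ii) if `r = 3` then `H₂ ≅ ℤ⁹ × (ℤ/gcd(n_1,n_2,n_3,2))³`;
(iii) if `r ≥ 4` then `H₂ ≅ ℤ^{r²}` (no torsion). -/
theorem U_quandle_commutator_and_H2 (r : ℕ) (hr : 3 ≤ r) (n : Fin r → ℕ)
    (hn : ∀ i, 1 ≤ n i) :
    Nonempty (Additive ↥(commutator (StructureGroup (Uop n))) ≃+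
        ZMod (Nat.gcd (Finset.univ.gcd n) 2)) ∧
      (r = 3 → Nonempty (H2 (Uop n) ≃+
        (Fin 9 → ℤ) × (Fin 3 → ZMod (Nat.gcd (Finset.univ.gcd n) 2)))) ∧
      (4 ≤ r → Nonempty (H2 (Uop n) ≃+ (Fin (r ^ 2) → ℤ))) := by
  have hne : ∀ i, NeZero (n i) := fun i => ⟨by have := hn i; omega⟩
  have hpx : ∃ p : Fin r → Fin r, ∀ i, i ≠ p i := by
    choose p hp using fun i : Fin r => UQ.exists_third hr i i
    exact ⟨p, fun i => (hp i).1.symm⟩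
  obtain ⟨p, hp⟩ := hpx
  refine ⟨UQ.part1 n hr, fun h => ?_, fun h => ?_⟩
  · have hm : ∀ i, Nat.gcd (Finset.univ.gcd n) 2 ∣ n i := fun i =>
      (Nat.gcd_dvd_left _ _).trans (Finset.gcd_dvd (Finset.mem_univ i))
    obtain ⟨e⟩ := UQ.H2_equiv n p hm hp (Nat.gcd_dvd_right _ _) (Or.inl h) (fun i => by
      rw [← addOrderOf_dvd_iff_nsmul_eq_zero]
      refine Nat.dvd_gcd (Finset.dvd_gcd fun j _ => ?_) ?_
      · exact addOrderOf_dvd_iff_nsmul_eq_zero.2 (UQ.ga_n n hp i j)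
      · exact addOrderOf_dvd_iff_nsmul_eq_zero.2 (UQ.ga_two n hp hr i))
    generalize Nat.gcd (Finset.univ.gcd n) 2 = m at e
    subst h
    exact ⟨e.trans (AddEquiv.prodCongr
      (LinearEquiv.funCongrLeft ℤ ℤ finProdFinEquiv.symm).toAddEquiv (AddEquiv.refl _))⟩
  · obtain ⟨e⟩ := UQ.H2_equiv n p (m := 1) (fun i => one_dvd _) hp (one_dvd _) (Or.inr rfl)
      (fun i => by rw [UQ.ga_four n hp h i, smul_zero])
    have e2 : Fin r × Fin r ≃ Fin (r ^ 2) := finProdFinEquiv.trans (finCongr (by ring))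
    exact ⟨(e.trans AddEquiv.prodUnique).trans (LinearEquiv.funCongrLeft ℤ ℤ e2.symm).toAddEquiv⟩
end
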